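/- arXiv:math/0507020 — 2 statements merged into one kernel-verified Lean document; each statement's English description precedes it below -/
import Mathlib

section
/- There exists a constant C₀ > 0, depending only on α and β, such that for every δ > 0 there exist constants C > 0 and λ₀ > 0 (depending on δ, α, β) with the following property: for every real Dirichlet quasimode datum (u, λ, f) on the stadium S with λ ≥ λ₀, the boundary integral of w |∂_N u|² over the portion of ∂S ∩ W where w ≤ δ λ^{−2} satisfies ∫_{∂S ∩ W ∩ {w ≤ δ λ^{−2}}} w |∂_N u|² dl ≤ δ C₀ ‖u‖²_{L²(S)} + δ C λ^{−2} ‖f‖²_{L²(S)}. -/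
open MeasureTheory Real Set Filter

noncomputable section

/-- Partial derivative in the first (x) variable. -/
def pdx (u : ℝ × ℝ → ℝ) (p : ℝ × ℝ) : ℝ := deriv (fun t => u (t, p.2)) p.1

/-- Partial derivative in the second (y) variable. -/
def pdy (u : ℝ × ℝ → ℝ) (p : ℝ × ℝ) : ℝ := deriv (fun t => u (p.1, t)) p.2

/-- The positive Laplacian `Δu = -u_xx - u_yy`. -/
def lap (u : ℝ × ℝ → ℝ) (p : ℝ × ℝ) : ℝ := -(pdx (pdx u) p) - (pdy (pdy u) p)

/-- The central rectangle `R = [-α,α] × [-β,β]`. -/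
def Rect (α β : ℝ) : Set (ℝ × ℝ) := Icc (-α) α ×ˢ Icc (-β) β

/-- The wings `W = W₊ ∪ W₋`, two half-discs of radius β centered at `(±α, 0)`. -/
def Wings (α β : ℝ) : Set (ℝ × ℝ) :=
  {p | (p.1 - α) ^ 2 + p.2 ^ 2 ≤ β ^ 2 ∧ α ≤ p.1} ∪
  {p | (p.1 + α) ^ 2 + p.2 ^ 2 ≤ β ^ 2 ∧ p.1 ≤ -α}

/-- The Bunimovich stadium `S = R ∪ W`. -/
def Stadium (α β : ℝ) : Set (ℝ × ℝ) := Rect α β ∪ Wings α β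

/-- The boundary `∂S`: two horizontal segments and two semicircles. -/
def StadiumBoundary (α β : ℝ) : Set (ℝ × ℝ) :=
  {p | |p.1| ≤ α ∧ (p.2 = β ∨ p.2 = -β)} ∪
  {p | (|p.1| - α) ^ 2 + p.2 ^ 2 = β ^ 2 ∧ α ≤ |p.1|}

/-- Boundary integral `∫_{∂S} g dl` of an integrand `g` depending on the boundary point
and the outward unit normal at that point. -/
def bdryInt (α β : ℝ) (g : ℝ × ℝ → ℝ × ℝ → ℝ) : ℝ :=
  (∫ x in (-α)..α, (g (x, β) (0, 1) + g (x, -β) (0, -1))) +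
  β * ∫ θ in (-(π / 2))..(π / 2),
    (g (α + β * cos θ, β * sin θ) (cos θ, sin θ) +
     g (-(α + β * cos θ), β * sin θ) (-cos θ, sin θ))

/-- Boundary integral `∫_{∂S ∩ W} g dl` over the two semicircles only. -/
def bdryIntW (α β : ℝ) (g : ℝ × ℝ → ℝ × ℝ → ℝ) : ℝ :=
  β * ∫ θ in (-(π / 2))..(π / 2),
    (g (α + β * cos θ, β * sin θ) (cos θ, sin θ) +
     g (-(α + β * cos θ), β * sin θ) (-cos θ, sin θ))

/-- The normal derivative `∂_N u = n₁ ∂_x u + n₂ ∂_y u` at a boundary point `p`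
with outward unit normal `n`. -/
def nderiv (u : ℝ × ℝ → ℝ) (p n : ℝ × ℝ) : ℝ := n.1 * pdx u p + n.2 * pdy u p

/-- A real Dirichlet quasimode datum `(u, λ, f)` on the stadium: `λ > 0`, `u` smooth on a
neighborhood of `S`, `u = 0` on `∂S`, and `(Δ - λ²) u = f` on `S`. -/
structure QMDatum (α β : ℝ) where
  u : ℝ × ℝ → ℝ
  lam : ℝ
  f : ℝ × ℝ → ℝ
  lam_pos : 0 < lam
  smooth : ∃ V : Set (ℝ × ℝ), IsOpen V ∧ Stadium α β ⊆ V ∧ ContDiffOn ℝ (⊤ : ℕ∞) u V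
  dirichlet : ∀ p ∈ StadiumBoundary α β, u p = 0
  eqn : ∀ p ∈ Stadium α β, lap u p - lam ^ 2 * u p = f p

open scoped Topology ContDiff

lemma mem_stadium_iff {α β : ℝ} (hα : 0 < α) (hβ : 0 < β) (p : ℝ × ℝ) :
    p ∈ Stadium α β ↔ (max (|p.1| - α) 0) ^ 2 + p.2 ^ 2 ≤ β ^ 2 := by
  obtain ⟨x, y⟩ := p
  simp only [Stadium, Rect, Wings, mem_union, mem_prod, mem_Icc, mem_ofPred_eq]
  have h1 : (-α ≤ x ∧ x ≤ α) ↔ |x| ≤ α := abs_le.symm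
  have h2 : (-β ≤ y ∧ y ≤ β) ↔ y ^ 2 ≤ β ^ 2 := by
    rw [← abs_le, sq_le_sq, abs_of_pos hβ]
  rw [h1, h2]
  rcases le_or_gt (|x|) α with h | h
  · rw [max_eq_right (by linarith)]
    constructor
    · rintro (⟨_, h⟩ | ⟨h, _⟩ | ⟨h, _⟩) <;> nlinarith
    · intro h'; left; exact ⟨h, by nlinarith⟩
  · rw [max_eq_left (by linarith)]
    rcases le_or_gt 0 x with hx | hx
    · rw [abs_of_nonneg hx] at *
      constructor
      · rintro (⟨_, h⟩ | ⟨h, _⟩ | ⟨h, _⟩)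
        · linarith
        · exact h
        · linarith
      · intro h'; right; left; exact ⟨h', h.le⟩
    · rw [abs_of_neg hx] at *
      constructor
      · rintro (⟨_, h⟩ | ⟨h, _⟩ | ⟨h, _⟩)
        · linarith
        · linarith
        · nlinarith
      · intro h'; right; right; exact ⟨by nlinarith, by linarith⟩

lemma stadium_sub {α β : ℝ} (hα : 0 < α) (hβ : 0 < β) :
    Stadium α β ⊆ Icc (-(α+β)) (α+β) ×ˢ Icc (-β) β := by
  intro p hp
  rw [mem_stadium_iff hα hβ] at hp
  have h0 := le_max_right (|p.1| - α) 0
  have h1 := le_max_left (|p.1| - α) 0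
  have hy : |p.2| ≤ β := by
    rw [← abs_of_pos hβ, ← sq_le_sq]; nlinarith
  have hm : max (|p.1| - α) 0 ≤ β := by
    apply le_of_sq_le_sq _ hβ.le
    nlinarith [sq_nonneg p.2]
  exact ⟨abs_le.1 (by linarith), abs_le.1 hy⟩

lemma stadium_closed {α β : ℝ} (hα : 0 < α) (hβ : 0 < β) : IsClosed (Stadium α β) := by
  have : Stadium α β = {p | (max (|p.1| - α) 0) ^ 2 + p.2 ^ 2 ≤ β ^ 2} := by
    ext p; exact mem_stadium_iff hα hβ p
  rw [this]
  exact isClosed_le (by fun_prop) (by fun_prop)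

lemma stadium_compact {α β : ℝ} (hα : 0 < α) (hβ : 0 < β) : IsCompact (Stadium α β) :=
  (isCompact_Icc.prod isCompact_Icc).of_isClosed_subset (stadium_closed hα hβ)
    (stadium_sub hα hβ)

/-- the half-height -/
def hh (α β x : ℝ) : ℝ := √(β ^ 2 - (max (|x| - α) 0) ^ 2)
/-- the half-width -/
def rr (α β y : ℝ) : ℝ := α + √(β ^ 2 - y ^ 2)

lemma stadium_slice_x {α β : ℝ} (hα : 0 < α) (hβ : 0 < β) (x y : ℝ)
    (hx : x ∈ Icc (-(α+β)) (α+β)) :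
    (x, y) ∈ Stadium α β ↔ y ∈ Icc (-(hh α β x)) (hh α β x) := by
  rw [mem_stadium_iff hα hβ, mem_Icc, ← abs_le, hh]
  have hx' : |x| ≤ α + β := abs_le.2 hx
  have h0 := le_max_right (|x| - α) 0
  have hm : max (|x| - α) 0 ≤ β := max_le (by linarith) hβ.le
  rw [Real.le_sqrt (abs_nonneg _), sq_abs]
  · constructor <;> intro h <;> simp only at * <;> linarith
  · nlinarith

lemma stadium_slice_y {α β : ℝ} (hα : 0 < α) (hβ : 0 < β) (x y : ℝ)
    (hy : y ∈ Icc (-β) β) :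
    (x, y) ∈ Stadium α β ↔ x ∈ Icc (-(rr α β y)) (rr α β y) := by
  rw [mem_stadium_iff hα hβ, mem_Icc, ← abs_le, rr]
  have hy' : |y| ≤ β := abs_le.2 hy
  have hy2 : y ^ 2 ≤ β ^ 2 := by rw [← sq_abs y]; gcongr
  have : |x| ≤ α + √(β ^ 2 - y ^ 2) ↔ max (|x| - α) 0 ≤ √(β ^ 2 - y ^ 2) := by
    rw [max_le_iff]
    constructor
    · intro h; exact ⟨by linarith, Real.sqrt_nonneg _⟩
    · rintro ⟨h, _⟩; linarith
  rw [this, Real.le_sqrt (le_max_right _ _)]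
  · constructor <;> intro h <;> simp only at * <;> linarith
  · linarith

lemma stadium_intOn {α β : ℝ} (hα : 0 < α) (hβ : 0 < β) {g : ℝ × ℝ → ℝ} (hg : Continuous g) :
    IntegrableOn g (Stadium α β) :=
  hg.continuousOn.integrableOn_compact (stadium_compact hα hβ)

lemma stadium_fubini_x {α β : ℝ} (hα : 0 < α) (hβ : 0 < β) {g : ℝ × ℝ → ℝ} (hg : Continuous g) :
    ∫ p in Stadium α β, g p =
      ∫ x in (-(α+β))..(α+β), ∫ y in (-(hh α β x))..(hh α β x), g (x, y) := by
  have hm := (stadium_closed hα hβ).measurableSet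
  have hi := (integrable_indicator_iff hm).2 (stadium_intOn hα hβ hg)
  rw [← integral_indicator hm, Measure.volume_eq_prod, integral_prod _ hi,
    intervalIntegral.integral_of_le (by linarith), ← integral_Icc_eq_integral_Ioc,
    ← integral_indicator measurableSet_Icc]
  congr 1; ext x
  by_cases hx : x ∈ Icc (-(α+β)) (α+β)
  · rw [indicator_of_mem hx, intervalIntegral.integral_of_le (by
      have : 0 ≤ hh α β x := Real.sqrt_nonneg _
      linarith), ← integral_Icc_eq_integral_Ioc, ← integral_indicator measurableSet_Icc]
    congr 1; ext y
    simp only [indicator, stadium_slice_x hα hβ x y hx]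
  · rw [indicator_of_notMem hx]
    convert integral_zero ℝ ℝ with y
    exact indicator_of_notMem (fun h => hx (stadium_sub hα hβ h).1) _

lemma stadium_fubini_y {α β : ℝ} (hα : 0 < α) (hβ : 0 < β) {g : ℝ × ℝ → ℝ} (hg : Continuous g) :
    ∫ p in Stadium α β, g p =
      ∫ y in (-β)..β, ∫ x in (-(rr α β y))..(rr α β y), g (x, y) := by
  have hm := (stadium_closed hα hβ).measurableSet
  have hi := (integrable_indicator_iff hm).2 (stadium_intOn hα hβ hg)
  rw [← integral_indicator hm, Measure.volume_eq_prod, integral_prod_symm _ hi,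
    intervalIntegral.integral_of_le (by linarith), ← integral_Icc_eq_integral_Ioc,
    ← integral_indicator measurableSet_Icc]
  congr 1; ext y
  by_cases hy : y ∈ Icc (-β) β
  · rw [indicator_of_mem hy, intervalIntegral.integral_of_le (by
      have : 0 ≤ rr α β y := add_nonneg hα.le (Real.sqrt_nonneg _)
      linarith), ← integral_Icc_eq_integral_Ioc, ← integral_indicator measurableSet_Icc]
    congr 1; ext x
    simp only [indicator, stadium_slice_y hα hβ x y hy]
  · rw [indicator_of_notMem hy]
    convert integral_zero ℝ ℝ with x
    exact indicator_of_notMem (fun h => hy (stadium_sub hα hβ h).2) _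

lemma hasDerivAt_pdx {F : ℝ × ℝ → ℝ} (hF : Differentiable ℝ F) (x y : ℝ) :
    HasDerivAt (fun t => F (t, y)) (pdx F (x, y)) x := by
  have : DifferentiableAt ℝ (fun t => F (t, y)) x := by fun_prop
  exact this.hasDerivAt

lemma hasDerivAt_pdy {F : ℝ × ℝ → ℝ} (hF : Differentiable ℝ F) (x y : ℝ) :
    HasDerivAt (fun t => F (x, t)) (pdy F (x, y)) y := by
  have : DifferentiableAt ℝ (fun t => F (x, t)) y := by fun_prop
  exact this.hasDerivAt

lemma pdx_eq_fderiv {F : ℝ × ℝ → ℝ} (hF : Differentiable ℝ F) :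
    pdx F = fun p => fderiv ℝ F p (1, 0) := by
  ext ⟨x, y⟩
  have h2 : HasDerivAt (fun t : ℝ => (t, y)) ((1 : ℝ), (0 : ℝ)) x :=
    (hasDerivAt_id x).prodMk (hasDerivAt_const x y)
  have := (hF (x, y)).hasFDerivAt.comp_hasDerivAt x h2
  exact (hasDerivAt_pdx hF x y).unique this

lemma pdy_eq_fderiv {F : ℝ × ℝ → ℝ} (hF : Differentiable ℝ F) :
    pdy F = fun p => fderiv ℝ F p (0, 1) := by
  ext ⟨x, y⟩
  have h2 : HasDerivAt (fun t : ℝ => (x, t)) ((0 : ℝ), (1 : ℝ)) y :=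
    (hasDerivAt_const y x).prodMk (hasDerivAt_id y)
  have := (hF (x, y)).hasFDerivAt.comp_hasDerivAt y h2
  exact (hasDerivAt_pdy hF x y).unique this

lemma contDiff_pdx {F : ℝ × ℝ → ℝ} (hF : ContDiff ℝ ∞ F) : ContDiff ℝ ∞ (pdx F) := by
  rw [pdx_eq_fderiv (hF.differentiable (by simp))]
  exact (hF.fderiv_right (m := ∞) (by simp)).clm_apply contDiff_const

lemma contDiff_pdy {F : ℝ × ℝ → ℝ} (hF : ContDiff ℝ ∞ F) : ContDiff ℝ ∞ (pdy F) := by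
  rw [pdy_eq_fderiv (hF.differentiable (by simp))]
  exact (hF.fderiv_right (m := ∞) (by simp)).clm_apply contDiff_const

lemma pdx_pdy_comm {F : ℝ × ℝ → ℝ} (hF : ContDiff ℝ ∞ F) (p : ℝ × ℝ) :
    pdx (pdy F) p = pdy (pdx F) p := by
  have hd := hF.differentiable (by simp)
  rw [pdx_eq_fderiv ((contDiff_pdy hF).differentiable (by simp)),
    pdy_eq_fderiv ((contDiff_pdx hF).differentiable (by simp)),
    pdx_eq_fderiv hd, pdy_eq_fderiv hd]
  have h2 : DifferentiableAt ℝ (fderiv ℝ F) p :=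
    (hF.fderiv_right (m := ∞) (by simp)).differentiable (by simp) p
  have hs : IsSymmSndFDerivAt ℝ F p := hF.contDiffAt.isSymmSndFDerivAt (by simp only [minSmoothness_of_isRCLikeNormedField]; exact WithTop.coe_le_coe.2 le_top)
  simp only
  rw [fderiv_clm_apply h2 (by fun_prop), fderiv_clm_apply h2 (by fun_prop)]
  simpa using hs.eq (1, 0) (0, 1)

lemma continuous_rr (α β : ℝ) : Continuous (rr α β) := by unfold rr; fun_prop
lemma continuous_hh (α β : ℝ) : Continuous (hh α β) := by unfold hh; fun_prop

lemma int_pdx {α β : ℝ} (hα : 0 < α) (hβ : 0 < β) {F : ℝ × ℝ → ℝ} (hF : ContDiff ℝ ∞ F) :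
    ∫ p in Stadium α β, pdx F p =
      β * ∫ θ in (-(π / 2))..(π / 2),
        (F (α + β * cos θ, β * sin θ) * cos θ - F (-(α + β * cos θ), β * sin θ) * cos θ) := by
  have hc := (contDiff_pdx hF).continuous
  have hFc := hF.continuous
  have hrr := continuous_rr α β
  rw [stadium_fubini_y hα hβ hc]
  have h1 : ∀ y, ∫ x in (-(rr α β y))..(rr α β y), pdx F (x, y)
      = F (rr α β y, y) - F (-(rr α β y), y) := fun y =>
    intervalIntegral.integral_eq_sub_of_hasDerivAt (f := fun x => F (x, y))
      (fun x _ => hasDerivAt_pdx (hF.differentiable (by simp)) x y)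
      ((by fun_prop : Continuous fun x => pdx F (x, y)).intervalIntegrable _ _)
  simp only [h1]
  have h2 := intervalIntegral.integral_comp_mul_deriv (a := -(π / 2)) (b := π / 2)
    (f := fun θ => β * sin θ) (f' := fun θ => β * cos θ)
    (g := fun y => F (rr α β y, y) - F (-(rr α β y), y))
    (fun x _ => (hasDerivAt_sin x).const_mul β) (by fun_prop) (by fun_prop)
  simp only [sin_neg, sin_pi_div_two, mul_one, mul_neg] at h2
  rw [← h2, ← intervalIntegral.integral_const_mul]
  apply intervalIntegral.integral_congr
  intro θ hθ
  rw [uIcc_of_le (by linarith [pi_pos])] at hθ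
  have hcos := cos_nonneg_of_mem_Icc hθ
  have : rr α β (β * sin θ) = α + β * cos θ := by
    rw [rr, show β ^ 2 - (β * sin θ) ^ 2 = (β * cos θ) ^ 2 by
      linear_combination β ^ 2 * (- sin_sq_add_cos_sq θ), Real.sqrt_sq (by positivity)]
  simp only [Function.comp, this]
  ring

lemma wing_sub {α β : ℝ} (hα : 0 < α) (hβ : 0 < β) {G : ℝ × ℝ → ℝ} (hG : Continuous G) :
    ∫ x in α..(α+β), (G (x, hh α β x) - G (x, -(hh α β x))) =
      β * ∫ θ in (-(π / 2))..(π / 2), G (α + β * cos θ, β * sin θ) * sin θ := by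
  have hhh := continuous_hh α β
  have h2 := intervalIntegral.integral_comp_mul_deriv (a := 0) (b := π / 2)
    (f := fun θ => α + β * cos θ) (f' := fun θ => β * (-sin θ))
    (g := fun x => G (x, hh α β x) - G (x, -(hh α β x)))
    (fun x _ => ((hasDerivAt_cos x).const_mul β).const_add α) (by fun_prop) (by fun_prop)
  simp only [cos_zero, cos_pi_div_two, mul_one, mul_zero, add_zero] at h2
  rw [intervalIntegral.integral_symm, ← h2, ← intervalIntegral.integral_const_mul]
  set Ψ : ℝ → ℝ := fun θ => β * (G (α + β * cos θ, β * sin θ) * sin θ) with hΨ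
  have hΨc : Continuous Ψ := by rw [hΨ]; fun_prop
  have h3 : ∫ θ in (-(π/2))..0, Ψ θ = ∫ θ in 0..(π/2), Ψ (-θ) := by
    rw [intervalIntegral.integral_comp_neg]; simp
  rw [← intervalIntegral.integral_add_adjacent_intervals (b := 0) (hΨc.intervalIntegrable _ _)
    (hΨc.intervalIntegrable _ _), h3, ← intervalIntegral.integral_neg,
    ← intervalIntegral.integral_add ((by fun_prop : Continuous fun θ => Ψ (-θ)).intervalIntegrable _ _)
    (hΨc.intervalIntegrable _ _)]
  apply intervalIntegral.integral_congr
  intro θ hθ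
  rw [uIcc_of_le (by linarith [pi_pos])] at hθ
  have hsin : 0 ≤ sin θ := sin_nonneg_of_nonneg_of_le_pi hθ.1 (by linarith [hθ.2, pi_pos])
  have hcos : 0 ≤ cos θ := cos_nonneg_of_mem_Icc ⟨by linarith [hθ.1, pi_pos], hθ.2⟩
  have : hh α β (α + β * cos θ) = β * sin θ := by
    have hp : 0 ≤ β * cos θ := by positivity
    rw [hh, abs_of_nonneg (by positivity), add_sub_cancel_left, max_eq_left hp,
      show β ^ 2 - (β * cos θ) ^ 2 = (β * sin θ) ^ 2 by
      linear_combination β ^ 2 * (- sin_sq_add_cos_sq θ), Real.sqrt_sq (by positivity)]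
  simp only [Function.comp, this, hΨ, cos_neg, sin_neg]
  ring_nf

lemma int_pdy {α β : ℝ} (hα : 0 < α) (hβ : 0 < β) {G : ℝ × ℝ → ℝ} (hG : ContDiff ℝ ∞ G) :
    ∫ p in Stadium α β, pdy G p =
      (∫ x in (-α)..α, (G (x, β) - G (x, -β))) +
      β * ∫ θ in (-(π / 2))..(π / 2),
        (G (α + β * cos θ, β * sin θ) * sin θ + G (-(α + β * cos θ), β * sin θ) * sin θ) := by
  have hc := (contDiff_pdy hG).continuous
  have hGc := hG.continuous
  have hhh := continuous_hh α β
  rw [stadium_fubini_x hα hβ hc]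
  have h1 : ∀ x, ∫ y in (-(hh α β x))..(hh α β x), pdy G (x, y)
      = G (x, hh α β x) - G (x, -(hh α β x)) := fun x =>
    intervalIntegral.integral_eq_sub_of_hasDerivAt (f := fun y => G (x, y))
      (fun y _ => hasDerivAt_pdy (hG.differentiable (by simp)) x y)
      ((by fun_prop : Continuous fun y => pdy G (x, y)).intervalIntegrable _ _)
  simp only [h1]
  have hK : Continuous fun x => G (x, hh α β x) - G (x, -(hh α β x)) := by fun_prop
  rw [← intervalIntegral.integral_add_adjacent_intervals (b := -α) (hK.intervalIntegrable _ _)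
    (hK.intervalIntegrable _ _), ← intervalIntegral.integral_add_adjacent_intervals
    (a := -α) (b := α) (hK.intervalIntegrable _ _) (hK.intervalIntegrable _ _),
    wing_sub hα hβ hGc]
  have h4 := wing_sub hα hβ (G := fun p => G (-p.1, p.2)) (by fun_prop)
  simp only at h4
  have heven : ∀ x, hh α β x = hh α β (-x) := fun x => by simp [hh]
  have h5 : ∫ x in α..(α+β), (G (-x, hh α β x) - G (-x, -(hh α β x)))
      = ∫ x in (-(α+β))..(-α), (G (x, hh α β x) - G (x, -(hh α β x))) := by
    rw [← intervalIntegral.integral_comp_neg]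
    simp only [← heven]
  rw [← h5, h4]
  have h6 : ∫ x in (-α)..α, (G (x, hh α β x) - G (x, -(hh α β x)))
      = ∫ x in (-α)..α, (G (x, β) - G (x, -β)) := by
    apply intervalIntegral.integral_congr
    intro x hx
    rw [uIcc_of_le (by linarith)] at hx
    have : hh α β x = β := by
      rw [hh, max_eq_right (by linarith [abs_le.2 hx])]
      simp [hβ.le]
    simp only [this]
  rw [h6, intervalIntegral.integral_add]
  · ring
  · exact (by fun_prop : Continuous _).intervalIntegrable _ _
  · exact (by fun_prop : Continuous _).intervalIntegrable _ _

lemma exists_global {S V : Set (ℝ × ℝ)} (hS : IsClosed S) (hV : IsOpen V) (hSV : S ⊆ V)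
    {u : ℝ × ℝ → ℝ} (hu : ContDiffOn ℝ (⊤ : ℕ∞) u V) :
    ∃ v : ℝ × ℝ → ℝ, ContDiff ℝ ∞ v ∧ ∀ᶠ p in 𝓝ˢ S, v p = u p := by
  obtain ⟨χ, h0, h1, -⟩ := exists_contMDiffMap_zero_one_nhds_of_isClosed (n := ⊤)
    (modelWithCornersSelf ℝ (ℝ × ℝ)) hV.isClosed_compl hS
    (disjoint_left.2 fun x hx hx' => hx (hSV hx'))
  have hχ : ContDiff ℝ ∞ χ := χ.contMDiff.contDiff
  refine ⟨fun p => χ p * u p, ?_, ?_⟩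
  · rw [contDiff_iff_contDiffAt]
    intro p
    by_cases hp : p ∈ V
    · exact hχ.contDiffAt.mul (hu.contDiffAt (hV.mem_nhds hp))
    · have : ∀ᶠ q in 𝓝 p, χ q = 0 := h0.filter_mono (nhds_le_nhdsSet hp)
      refine (contDiffAt_const (c := (0:ℝ))).congr_of_eventuallyEq ?_
      filter_upwards [this] with q hq
      simp [hq]
  · filter_upwards [h1] with p hp
    simp [hp]

lemma pdx_congr {S : Set (ℝ × ℝ)} {u v : ℝ × ℝ → ℝ} (h : ∀ᶠ p in 𝓝ˢ S, v p = u p) :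
    ∀ᶠ p in 𝓝ˢ S, pdx v p = pdx u p := by
  filter_upwards [h.eventually_nhdsSet] with p hp
  have hc : Tendsto (fun t : ℝ => (t, p.2)) (𝓝 p.1) (𝓝 p) :=
    (by fun_prop : Continuous fun t : ℝ => (t, p.2)).tendsto p.1
  exact Filter.EventuallyEq.deriv_eq (hc.eventually hp)

lemma pdy_congr {S : Set (ℝ × ℝ)} {u v : ℝ × ℝ → ℝ} (h : ∀ᶠ p in 𝓝ˢ S, v p = u p) :
    ∀ᶠ p in 𝓝ˢ S, pdy v p = pdy u p := by
  filter_upwards [h.eventually_nhdsSet] with p hp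
  have hc : Tendsto (fun t : ℝ => (p.1, t)) (𝓝 p.2) (𝓝 p) :=
    (by fun_prop : Continuous fun t : ℝ => (p.1, t)).tendsto p.2
  exact Filter.EventuallyEq.deriv_eq (hc.eventually hp)

lemma div_thm {α β : ℝ} (hα : 0 < α) (hβ : 0 < β) {F G : ℝ × ℝ → ℝ} (hF : ContDiff ℝ ∞ F)
    (hG : ContDiff ℝ ∞ G) :
    ∫ p in Stadium α β, (pdx F p + pdy G p) =
      (∫ x in (-α)..α, (G (x, β) - G (x, -β))) +
      β * ∫ θ in (-(π / 2))..(π / 2),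
        ((cos θ * F (α + β * cos θ, β * sin θ) + sin θ * G (α + β * cos θ, β * sin θ)) +
        (-cos θ * F (-(α + β * cos θ), β * sin θ) + sin θ * G (-(α + β * cos θ), β * sin θ))) := by
  have hFc := hF.continuous
  have hGc := hG.continuous
  rw [integral_add (stadium_intOn hα hβ (contDiff_pdx hF).continuous)
    (stadium_intOn hα hβ (contDiff_pdy hG).continuous), int_pdx hα hβ hF, int_pdy hα hβ hG,
    add_left_comm, ← mul_add, ← intervalIntegral.integral_add]
  · congr 3; ext θ; ring
  · exact (by fun_prop : Continuous _).intervalIntegrable _ _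
  · exact (by fun_prop : Continuous _).intervalIntegrable _ _

lemma arc_mem {α β : ℝ} (hα : 0 < α) (hβ : 0 < β) {θ : ℝ} (hθ : 0 ≤ cos θ) :
    (α + β * cos θ, β * sin θ) ∈ StadiumBoundary α β ∧
    (-(α + β * cos θ), β * sin θ) ∈ StadiumBoundary α β := by
  have h : 0 ≤ β * cos θ := by positivity
  have h' : 0 ≤ α + β * cos θ := by positivity
  constructor <;> right <;> simp only [mem_ofPred_eq, abs_neg, abs_of_nonneg h'] <;>
    refine ⟨?_, by linarith⟩ <;> linear_combination β ^ 2 * (sin_sq_add_cos_sq θ)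

lemma bdry_sub {α β : ℝ} (hα : 0 < α) (hβ : 0 < β) : StadiumBoundary α β ⊆ Stadium α β := by
  intro p hp
  rw [mem_stadium_iff hα hβ]
  rcases hp with ⟨h1, h2⟩ | ⟨h1, h2⟩
  · rw [max_eq_right (by linarith)]
    rcases h2 with h2 | h2 <;> rw [h2] <;> simp
  · rw [max_eq_left (by linarith), h1]

lemma chain2 {v : ℝ × ℝ → ℝ} (hv : Differentiable ℝ v) {a b : ℝ → ℝ} {a' b' t : ℝ}
    (ha : HasDerivAt a a' t) (hb : HasDerivAt b b' t) :
    HasDerivAt (fun t => v (a t, b t)) (a' * pdx v (a t, b t) + b' * pdy v (a t, b t)) t := by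
  have := (hv (a t, b t)).hasFDerivAt.comp_hasDerivAt t (ha.prodMk hb)
  have e : a' * pdx v (a t, b t) + b' * pdy v (a t, b t) = fderiv ℝ v (a t, b t) (a', b') := by
    rw [pdx_eq_fderiv hv, pdy_eq_fderiv hv,
      show ((a', b') : ℝ × ℝ) = a' • (1, 0) + b' • (0, 1) by simp, map_add, map_smul, map_smul]
    rfl
  rw [e]
  exact this

lemma tang {α β : ℝ} (hα : 0 < α) (hβ : 0 < β) {v : ℝ × ℝ → ℝ} (hv : Differentiable ℝ v)
    (h0 : ∀ p ∈ StadiumBoundary α β, v p = 0) {θ : ℝ} (hθ : θ ∈ Ioo (-(π/2)) (π/2)) :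
    -sin θ * pdx v (α + β * cos θ, β * sin θ) + cos θ * pdy v (α + β * cos θ, β * sin θ) = 0 ∧
    sin θ * pdx v (-(α + β * cos θ), β * sin θ) + cos θ * pdy v (-(α + β * cos θ), β * sin θ) = 0
    := by
  have he : ∀ᶠ t in 𝓝 θ, 0 ≤ cos t := by
    filter_upwards [isOpen_Ioo.mem_nhds hθ] with t ht
    exact (cos_pos_of_mem_Ioo ht).le
  have ha : HasDerivAt (fun t => α + β * cos t) (β * (-sin θ)) θ :=
    ((hasDerivAt_cos θ).const_mul β).const_add α
  have hb : HasDerivAt (fun t => β * sin t) (β * cos θ) θ := (hasDerivAt_sin θ).const_mul β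
  have h1 := chain2 hv ha hb
  have h2 := chain2 hv ha.neg hb
  have e1 : HasDerivAt (fun t => v (α + β * cos t, β * sin t)) 0 θ := by
    refine (hasDerivAt_const θ (0:ℝ)).congr_of_eventuallyEq ?_
    filter_upwards [he] with t ht using h0 _ (arc_mem hα hβ ht).1
  have e2 : HasDerivAt (fun t => v (-(α + β * cos t), β * sin t)) 0 θ := by
    refine (hasDerivAt_const θ (0:ℝ)).congr_of_eventuallyEq ?_
    filter_upwards [he] with t ht using h0 _ (arc_mem hα hβ ht).2
  have k1 := h1.unique e1
  have k2 := h2.unique e2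
  constructor
  · apply mul_left_cancel₀ hβ.ne'
    linear_combination k1
  · apply mul_left_cancel₀ hβ.ne'
    simp only [Pi.neg_apply] at k2
    linear_combination k2

lemma flat {α β : ℝ} {v : ℝ × ℝ → ℝ} (hv : Differentiable ℝ v)
    (h0 : ∀ p ∈ StadiumBoundary α β, v p = 0) {x : ℝ} (hx : x ∈ Ioo (-α) α) :
    pdx v (x, β) = 0 ∧ pdx v (x, -β) = 0 := by
  constructor
  · refine (hasDerivAt_pdx hv x β).unique ?_
    refine (hasDerivAt_const x (0:ℝ)).congr_of_eventuallyEq ?_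
    filter_upwards [isOpen_Ioo.mem_nhds hx] with t ht
    exact h0 _ (Or.inl ⟨abs_le.2 ⟨ht.1.le, ht.2.le⟩, Or.inl rfl⟩)
  · refine (hasDerivAt_pdx hv x (-β)).unique ?_
    refine (hasDerivAt_const x (0:ℝ)).congr_of_eventuallyEq ?_
    filter_upwards [isOpen_Ioo.mem_nhds hx] with t ht
    exact h0 _ (Or.inl ⟨abs_le.2 ⟨ht.1.le, ht.2.le⟩, Or.inr rfl⟩)

/-- Green's identity. -/
lemma green {α β : ℝ} (hα : 0 < α) (hβ : 0 < β) {v : ℝ × ℝ → ℝ} (hv : ContDiff ℝ ∞ v)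
    (h0 : ∀ p ∈ StadiumBoundary α β, v p = 0) :
    ∫ p in Stadium α β, ((pdx v p) ^ 2 + (pdy v p) ^ 2 - v p * lap v p) = 0 := by
  have hP := contDiff_pdx hv
  have hQ := contDiff_pdy hv
  have hd := hv.differentiable (by simp)
  have hPd := hP.differentiable (by simp)
  have hQd := hQ.differentiable (by simp)
  have key := div_thm hα hβ (hv.mul hP) (hv.mul hQ)
  have e : ∀ p, pdx (fun p => v p * pdx v p) p + pdy (fun p => v p * pdy v p) p
      = (pdx v p) ^ 2 + (pdy v p) ^ 2 - v p * lap v p := by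
    rintro ⟨x, y⟩
    have h1 : pdx (fun p => v p * pdx v p) (x, y) = _ :=
      ((hasDerivAt_pdx hd x y).mul (hasDerivAt_pdx hPd x y)).deriv
    have h2 : pdy (fun p => v p * pdy v p) (x, y) = _ :=
      ((hasDerivAt_pdy hd x y).mul (hasDerivAt_pdy hQd x y)).deriv
    rw [h1, h2, lap]
    ring
  simp only [e] at key
  rw [key]
  have z1 : ∫ x in (-α)..α, (v (x, β) * pdy v (x, β) - v (x, -β) * pdy v (x, -β)) = 0 := by
    rw [intervalIntegral.integral_congr (g := fun _ => 0)]
    · simp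
    · intro x hx
      rw [uIcc_of_le (by linarith)] at hx
      simp [h0 (x, β) (Or.inl ⟨abs_le.2 hx, Or.inl rfl⟩),
        h0 (x, -β) (Or.inl ⟨abs_le.2 hx, Or.inr rfl⟩)]
  rw [z1, intervalIntegral.integral_congr (g := fun _ => 0)]
  · simp
  · intro θ hθ
    rw [uIcc_of_le (by linarith [pi_pos])] at hθ
    have hm := arc_mem hα hβ (cos_nonneg_of_mem_Icc hθ)
    simp [h0 _ hm.1, h0 _ hm.2, - neg_add_rev]

/-- Rellich's identity with the radial field, as an inequality. -/
lemma rellich {α β : ℝ} (hα : 0 < α) (hβ : 0 < β) {v : ℝ × ℝ → ℝ} (hv : ContDiff ℝ ∞ v)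
    (h0 : ∀ p ∈ StadiumBoundary α β, v p = 0) (l : ℝ) :
    β * ∫ θ in (-(π / 2))..(π / 2), β / 2 * (
        (nderiv v (α + β * cos θ, β * sin θ) (cos θ, sin θ)) ^ 2 +
        (nderiv v (-(α + β * cos θ), β * sin θ) (-cos θ, sin θ)) ^ 2) ≤
    ∫ p in Stadium α β, (l ^ 2 * v p ^ 2 -
      (lap v p - l ^ 2 * v p) * (p.1 * pdx v p + p.2 * pdy v p)) := by
  have hP := contDiff_pdx hv
  have hQ := contDiff_pdy hv
  have hd := hv.differentiable (by simp)
  have hPd := hP.differentiable (by simp)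
  have hQd := hQ.differentiable (by simp)
  have hF : ContDiff ℝ ∞ (fun p : ℝ × ℝ => (p.1 * pdx v p + p.2 * pdy v p) * pdx v p
    - p.1 * (pdx v p * pdx v p + pdy v p * pdy v p) * (1/2) + l ^ 2 / 2 * (p.1 * (v p * v p))) := by
    fun_prop
  have hG : ContDiff ℝ ∞ (fun p : ℝ × ℝ => (p.1 * pdx v p + p.2 * pdy v p) * pdy v p
    - p.2 * (pdx v p * pdx v p + pdy v p * pdy v p) * (1/2) + l ^ 2 / 2 * (p.2 * (v p * v p))) := by
    fun_prop
  have key := div_thm hα hβ hF hG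
  have hvc := hv.continuous
  have hPc := hP.continuous
  have hQc := hQ.continuous
  rw [integral_congr_ae (g := fun p => (l ^ 2 * v p ^ 2 -
      (lap v p - l ^ 2 * v p) * (p.1 * pdx v p + p.2 * pdy v p)))] at key
  · rw [key]
    have z1 : 0 ≤ ∫ x in (-α)..α, (((x * pdx v (x, β) + β * pdy v (x, β)) * pdy v (x, β)
        - β * (pdx v (x, β) * pdx v (x, β) + pdy v (x, β) * pdy v (x, β)) * (1/2)
        + l ^ 2 / 2 * (β * (v (x, β) * v (x, β)))) -
        ((x * pdx v (x, -β) + -β * pdy v (x, -β)) * pdy v (x, -β)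
        - -β * (pdx v (x, -β) * pdx v (x, -β) + pdy v (x, -β) * pdy v (x, -β)) * (1/2)
        + l ^ 2 / 2 * (-β * (v (x, -β) * v (x, -β))))) := by
      rw [intervalIntegral.integral_of_le (by linarith), integral_Ioc_eq_integral_Ioo]
      refine setIntegral_nonneg measurableSet_Ioo fun x hx => ?_
      obtain ⟨f1, f2⟩ := flat hd h0 hx
      rw [f1, f2]
      have : 0 ≤ β * (pdy v (x, β) ^ 2 + pdy v (x, -β) ^ 2 + l ^ 2 * v (x, β) ^ 2
        + l ^ 2 * v (x, -β) ^ 2) := by positivity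
      nlinarith
    refine le_add_of_nonneg_of_le z1 ?_
    refine mul_le_mul_of_nonneg_left ?_ hβ.le
    rw [intervalIntegral.integral_of_le (by linarith [pi_pos]), integral_Ioc_eq_integral_Ioo,
      intervalIntegral.integral_of_le (by linarith [pi_pos]), integral_Ioc_eq_integral_Ioo]
    refine setIntegral_mono_on ?_ ?_ measurableSet_Ioo fun θ hθ => ?_
    · unfold nderiv
      exact ((by fun_prop : Continuous _).integrableOn_Icc).mono_set Ioo_subset_Icc_self
    · exact ((by fun_prop : Continuous _).integrableOn_Icc).mono_set Ioo_subset_Icc_self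
    · have hc := cos_pos_of_mem_Ioo hθ
      obtain ⟨t1, t2⟩ := tang hα hβ hd h0 hθ
      have hm := arc_mem hα hβ hc.le
      have v1 := h0 _ hm.1
      have v2 := h0 _ hm.2
      have hsc := sin_sq_add_cos_sq θ
      simp only [nderiv]
      rw [v1, v2]
      generalize pdx v (α + β * cos θ, β * sin θ) = P1 at *
      generalize pdy v (α + β * cos θ, β * sin θ) = Q1 at *
      generalize pdx v (-(α + β * cos θ), β * sin θ) = P2 at *
      generalize pdy v (-(α + β * cos θ), β * sin θ) = Q2 at *
      generalize sin θ = s at *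
      generalize cos θ = c at *
      obtain ⟨n1, hn1⟩ : ∃ n, n = c * P1 + s * Q1 := ⟨_, rfl⟩
      obtain ⟨n2, hn2⟩ : ∃ n, n = -c * P2 + s * Q2 := ⟨_, rfl⟩
      have a1 : P1 = c * n1 := by rw [hn1]; linear_combination -P1 * hsc - s * t1
      have b1 : Q1 = s * n1 := by rw [hn1]; linear_combination -Q1 * hsc + c * t1
      have a2 : P2 = -c * n2 := by rw [hn2]; linear_combination -P2 * hsc + s * t2
      have b2 : Q2 = s * n2 := by rw [hn2]; linear_combination -Q2 * hsc + c * t2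
      rw [← hn1, ← hn2, a1, b1, a2, b2]
      have r : 0 ≤ α * c * (n1 ^ 2 + n2 ^ 2) / 2 := by positivity
      rw [← sub_nonneg]
      refine r.trans_eq ?_
      linear_combination (-1) * (n1 ^ 2 + n2 ^ 2) / 2 * (α * c + β * (s ^ 2 + c ^ 2 + 1)) * hsc
  · refine Filter.Eventually.of_forall ?_
    rintro ⟨x, y⟩
    have hid := hasDerivAt_id x
    have hiy := hasDerivAt_id y
    have dvx := hasDerivAt_pdx hd x y
    have dvy := hasDerivAt_pdy hd x y
    have dPx := hasDerivAt_pdx hPd x y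
    have dPy := hasDerivAt_pdy hPd x y
    have dQx := hasDerivAt_pdx hQd x y
    have dQy := hasDerivAt_pdy hQd x y
    have h1 : pdx (fun p : ℝ × ℝ => (p.1 * pdx v p + p.2 * pdy v p) * pdx v p
      - p.1 * (pdx v p * pdx v p + pdy v p * pdy v p) * (1/2) + l ^ 2 / 2 * (p.1 * (v p * v p)))
      (x, y) = _ :=
      (((((hid.mul dPx).add (dQx.const_mul y)).mul dPx).sub
        ((hid.mul ((dPx.mul dPx).add (dQx.mul dQx))).mul_const (1/2))).add
        ((hid.mul (dvx.mul dvx)).const_mul (l ^ 2 / 2))).deriv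
    have h2 : pdy (fun p : ℝ × ℝ => (p.1 * pdx v p + p.2 * pdy v p) * pdy v p
      - p.2 * (pdx v p * pdx v p + pdy v p * pdy v p) * (1/2) + l ^ 2 / 2 * (p.2 * (v p * v p)))
      (x, y) = _ :=
      (((((dPy.const_mul x).add (hiy.mul dQy)).mul dQy).sub
        ((hiy.mul ((dPy.mul dPy).add (dQy.mul dQy))).mul_const (1/2))).add
        ((hiy.mul (dvy.mul dvy)).const_mul (l ^ 2 / 2))).deriv
    simp only
    rw [h1, h2, lap, pdx_pdy_comm hv]
    simp only [id, Pi.mul_apply, Pi.add_apply]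
    ring

lemma normsq_le {α β : ℝ} (hα : 0 < α) (hβ : 0 < β) {p : ℝ × ℝ} (hp : p ∈ Stadium α β) :
    p.1 ^ 2 + p.2 ^ 2 ≤ (α + β) ^ 2 := by
  have hx : |p.1| ≤ α + β := abs_le.2 (stadium_sub hα hβ hp).1
  rw [mem_stadium_iff hα hβ] at hp
  rw [← sq_abs p.1]
  have := abs_nonneg p.1
  rcases le_total (|p.1| - α) 0 with h | h
  · rw [max_eq_right h] at hp
    nlinarith
  · rw [max_eq_left h] at hp
    nlinarith

lemma bdry_bound {α β : ℝ} (hα : 0 < α) (hβ : 0 < β) {v : ℝ × ℝ → ℝ} (hv : ContDiff ℝ ∞ v)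
    (h0 : ∀ p ∈ StadiumBoundary α β, v p = 0) {l : ℝ} (hl : 1 ≤ l) :
    β * ∫ θ in (-(π / 2))..(π / 2), (
        (nderiv v (α + β * cos θ, β * sin θ) (cos θ, sin θ)) ^ 2 +
        (nderiv v (-(α + β * cos θ), β * sin θ) (-cos θ, sin θ)) ^ 2) ≤
    2 / β * (2 * l ^ 2 * (∫ p in Stadium α β, v p ^ 2) + ((α + β) ^ 2 + 1) *
      ∫ p in Stadium α β, (lap v p - l ^ 2 * v p) ^ 2) := by
  have hR := rellich hα hβ hv h0 l
  have hgr := green hα hβ hv h0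
  have hvc := hv.continuous
  have hPc := (contDiff_pdx hv).continuous
  have hQc := (contDiff_pdy hv).continuous
  have hLc : Continuous (lap v) := by
    unfold lap
    exact (contDiff_pdx (contDiff_pdx hv)).continuous.neg.sub
      (contDiff_pdy (contDiff_pdy hv)).continuous
  have hm := (stadium_closed hα hβ).measurableSet
  set M := (α + β) ^ 2 with hM
  have step : ∫ p in Stadium α β, (l ^ 2 * v p ^ 2 -
      (lap v p - l ^ 2 * v p) * (p.1 * pdx v p + p.2 * pdy v p)) ≤
      ∫ p in Stadium α β, (2 * l ^ 2 * v p ^ 2 + (M + 1) * (lap v p - l ^ 2 * v p) ^ 2 +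
        1 / 2 * ((pdx v p) ^ 2 + (pdy v p) ^ 2 - v p * lap v p)) := by
    refine setIntegral_mono_on (stadium_intOn hα hβ (by fun_prop))
      (stadium_intOn hα hβ (by fun_prop)) hm fun p hp => ?_
    have hn := normsq_le hα hβ hp
    rw [← hM] at hn
    generalize hg : lap v p - l ^ 2 * v p = g
    have hlap : lap v p = g + l ^ 2 * v p := by linarith
    rw [hlap]
    generalize pdx v p = P
    generalize pdy v p = Q
    generalize v p = w
    have k1 : -(g * (p.1 * P + p.2 * Q)) ≤ ((p.1 ^ 2 + p.2 ^ 2) * g ^ 2 + (P ^ 2 + Q ^ 2)) / 2 := by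
      nlinarith [sq_nonneg (p.1 * g + P), sq_nonneg (p.2 * g + Q)]
    have k2 : (p.1 ^ 2 + p.2 ^ 2) * g ^ 2 ≤ M * g ^ 2 := by gcongr
    have k3 : w ^ 2 ≤ l ^ 2 * w ^ 2 := le_mul_of_one_le_left (sq_nonneg w) (one_le_pow₀ hl)
    have k4 : 0 ≤ M * g ^ 2 := by positivity
    nlinarith [sq_nonneg (w - g), sq_nonneg w, sq_nonneg g]
  have e : ∫ p in Stadium α β, (2 * l ^ 2 * v p ^ 2 + (M + 1) * (lap v p - l ^ 2 * v p) ^ 2 +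
        1 / 2 * ((pdx v p) ^ 2 + (pdy v p) ^ 2 - v p * lap v p)) =
      2 * l ^ 2 * (∫ p in Stadium α β, v p ^ 2) + (M + 1) *
      ∫ p in Stadium α β, (lap v p - l ^ 2 * v p) ^ 2 := by
    rw [integral_add (stadium_intOn hα hβ (by fun_prop)) (stadium_intOn hα hβ (by fun_prop)),
      integral_add (stadium_intOn hα hβ (by fun_prop)) (stadium_intOn hα hβ (by fun_prop)),
      integral_const_mul, integral_const_mul, integral_const_mul, hgr]
    ring
  rw [intervalIntegral.integral_const_mul] at hR
  have := hR.trans (step.trans e.le)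
  rw [div_mul_eq_mul_div, le_div_iff₀ hβ]
  linarith

/-- Region I estimate: there is `C₀ > 0` depending only on `α, β` such that
for every `δ > 0` there are `C > 0` and `λ₀ > 0` with: every real Dirichlet quasimode
datum with `λ ≥ λ₀` satisfies
`∫_{∂S ∩ W ∩ {w ≤ δλ⁻²}} w |∂_N u|² dl ≤ δ C₀ ‖u‖²_{L²(S)} + δ C λ⁻² ‖f‖²_{L²(S)}`. -/
theorem stmt14 (α β : ℝ) (hα : 0 < α) (hβ : 0 < β) :
    ∃ C₀ > 0, ∀ δ > (0 : ℝ), ∃ C > 0, ∃ lam₀ > 0, ∀ d : QMDatum α β, d.lam ≥ lam₀ →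
      β * (∫ θ in {θ : ℝ | θ ∈ Icc (-(π / 2)) (π / 2) ∧ β * cos θ ≤ δ / d.lam ^ 2},
          (β * cos θ) *
            ((nderiv d.u (α + β * cos θ, β * sin θ) (cos θ, sin θ)) ^ 2 +
             (nderiv d.u (-(α + β * cos θ), β * sin θ) (-cos θ, sin θ)) ^ 2)) ≤
        δ * C₀ * (∫ p in Stadium α β, (d.u p) ^ 2) +
        δ * C * d.lam ^ (-2 : ℤ) * (∫ p in Stadium α β, (d.f p) ^ 2) := by
  refine ⟨4 / β, by positivity, fun δ hδ => ⟨2 / β * ((α + β) ^ 2 + 1), by positivity, 1, one_pos,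
    fun d hl => ?_⟩⟩
  obtain ⟨V, hV, hSV, hu⟩ := d.smooth
  obtain ⟨v, hv, hvu⟩ := exists_global (stadium_closed hα hβ) hV hSV hu
  have hx := pdx_congr hvu
  have hy := pdy_congr hvu
  have hxx := pdx_congr hx
  have hyy := pdy_congr hy
  have hv0 : ∀ p ∈ StadiumBoundary α β, v p = 0 := fun p hp => by
    rw [hvu.self_of_nhdsSet p (bdry_sub hα hβ hp), d.dirichlet p hp]
  have key := bdry_bound hα hβ hv hv0 hl
  have hm := (stadium_closed hα hβ).measurableSet
  have i1 : ∫ p in Stadium α β, v p ^ 2 = ∫ p in Stadium α β, d.u p ^ 2 :=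
    setIntegral_congr_fun hm fun p hp => by simp only [hvu.self_of_nhdsSet p hp]
  have i2 : ∫ p in Stadium α β, (lap v p - d.lam ^ 2 * v p) ^ 2 = ∫ p in Stadium α β, d.f p ^ 2 :=
    setIntegral_congr_fun hm fun p hp => by
      simp only [← d.eqn p hp, lap, hvu.self_of_nhdsSet p hp, hxx.self_of_nhdsSet p hp,
        hyy.self_of_nhdsSet p hp]
  rw [i1, i2] at key
  have hlp := d.lam_pos
  have hvc := hv.continuous
  have hPc := (contDiff_pdx hv).continuous
  have hQc := (contDiff_pdy hv).continuous
  set A : Set ℝ := {θ : ℝ | θ ∈ Icc (-(π / 2)) (π / 2) ∧ β * cos θ ≤ δ / d.lam ^ 2} with hA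
  have hAm : MeasurableSet A :=
    measurableSet_Icc.inter (isClosed_le (f := fun θ => β * cos θ) (g := fun _ => δ / d.lam ^ 2)
      (by fun_prop) (by fun_prop)).measurableSet
  have hAs : A ⊆ Icc (-(π / 2)) (π / 2) := fun θ h => h.1
  set N : ℝ → ℝ := fun θ => (nderiv v (α + β * cos θ, β * sin θ) (cos θ, sin θ)) ^ 2 +
        (nderiv v (-(α + β * cos θ), β * sin θ) (-cos θ, sin θ)) ^ 2 with hN
  have hNc : Continuous N := by rw [hN]; unfold nderiv; fun_prop
  have hN0 : ∀ θ, 0 ≤ N θ := fun θ => by simp only [hN]; positivity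
  have i3 : ∫ θ in A, (β * cos θ) *
            ((nderiv d.u (α + β * cos θ, β * sin θ) (cos θ, sin θ)) ^ 2 +
             (nderiv d.u (-(α + β * cos θ), β * sin θ) (-cos θ, sin θ)) ^ 2)
      = ∫ θ in A, (β * cos θ) * N θ := by
    refine setIntegral_congr_fun hAm fun θ hθ => ?_
    have hmm := arc_mem hα hβ (cos_nonneg_of_mem_Icc hθ.1)
    have m1 := bdry_sub hα hβ hmm.1
    have m2 := bdry_sub hα hβ hmm.2
    simp only [hN, nderiv, hx.self_of_nhdsSet _ m1, hx.self_of_nhdsSet _ m2,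
      hy.self_of_nhdsSet _ m1, hy.self_of_nhdsSet _ m2]
  have i4 : ∫ θ in A, (β * cos θ) * N θ ≤ ∫ θ in A, δ / d.lam ^ 2 * N θ := by
    refine setIntegral_mono_on ?_ ?_ hAm fun θ hθ => ?_
    · exact ((by fun_prop : Continuous _).integrableOn_Icc).mono_set hAs
    · exact ((by fun_prop : Continuous _).integrableOn_Icc).mono_set hAs
    · exact mul_le_mul_of_nonneg_right hθ.2 (hN0 θ)
  have i5 : ∫ θ in A, δ / d.lam ^ 2 * N θ ≤ δ / d.lam ^ 2 * ∫ θ in (-(π / 2))..(π / 2), N θ := by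
    rw [integral_const_mul, intervalIntegral.integral_of_le (by linarith [pi_pos]),
      ← integral_Icc_eq_integral_Ioc]
    refine mul_le_mul_of_nonneg_left ?_ (by positivity)
    exact setIntegral_mono_set hNc.integrableOn_Icc (Filter.Eventually.of_forall hN0)
      (Filter.Eventually.of_forall hAs)
  rw [i3]
  calc β * ∫ θ in A, (β * cos θ) * N θ
      ≤ β * (δ / d.lam ^ 2 * ∫ θ in (-(π / 2))..(π / 2), N θ) :=
        mul_le_mul_of_nonneg_left (i4.trans i5) hβ.le
    _ = δ / d.lam ^ 2 * (β * ∫ θ in (-(π / 2))..(π / 2), N θ) := by ring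
    _ ≤ δ / d.lam ^ 2 * _ := mul_le_mul_of_nonneg_left key (by positivity)
    _ = _ := by
      rw [zpow_neg, show d.lam ^ (2 : ℤ) = d.lam ^ 2 from zpow_ofNat _ 2]
      field_simp
      ring
end
end

section
/- Let χ : ℝ → ℝ be smooth with χ supported in {y : |y| > β/20}, χ(y) = −1 for y ≤ −β/10, and χ(y) = 1 for y ≥ β/10. Then for every ε > 0 there exist constants C > 0 and λ₀ > 0 (depending on ε, χ, α, β) such that for every real Dirichlet quasimode datum (u, λ, f) on the stadium S with λ ≥ λ₀, λ² ∫_{∂S ∩ W} w² χ(y) (∂_y u)(∂_N u) dl ≤ C λ⁸ ‖u‖²_{L²(W)} + ε ∫_S (∂_x u)² dA + C ‖f‖²_{L²(S)}, where ‖u‖_{L²(W)} is the L² norm of u over the wings W. (Note that since u vanishes on ∂S, on ∂S ∩ W one has ∂_y u = (sin θ) ∂_N u, so the integrand on the left equals χ(β sin θ) sin θ · w² (∂_N u)² ≥ 0.) -/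
open MeasureTheory Real Set Filter

noncomputable section

lemma pdx_eq {u : ℝ × ℝ → ℝ} {p : ℝ × ℝ} (h : DifferentiableAt ℝ u p) :
    HasDerivAt (fun t => u (t, p.2)) (fderiv ℝ u p (1, 0)) p.1 := by
  have h1 : HasDerivAt (fun t : ℝ => (t, p.2)) ((1 : ℝ), (0 : ℝ)) p.1 :=
    (hasDerivAt_id p.1).prodMk (hasDerivAt_const p.1 p.2)
  exact HasFDerivAt.comp_hasDerivAt (f := fun t : ℝ => (t, p.2)) p.1 (l := u) h.hasFDerivAt h1

lemma pdy_eq {u : ℝ × ℝ → ℝ} {p : ℝ × ℝ} (h : DifferentiableAt ℝ u p) :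
    HasDerivAt (fun t => u (p.1, t)) (fderiv ℝ u p (0, 1)) p.2 := by
  have h1 : HasDerivAt (fun t : ℝ => (p.1, t)) ((0 : ℝ), (1 : ℝ)) p.2 :=
    (hasDerivAt_const p.2 p.1).prodMk (hasDerivAt_id p.2)
  exact HasFDerivAt.comp_hasDerivAt (f := fun t : ℝ => (p.1, t)) p.2 (l := u) h.hasFDerivAt h1

lemma cd_diff {u : ℝ × ℝ → ℝ} {V : Set (ℝ × ℝ)} (hV : IsOpen V)
    (hu : ContDiffOn ℝ (⊤ : ℕ∞) u V) {p : ℝ × ℝ} (hp : p ∈ V) : DifferentiableAt ℝ u p :=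
  (hu.contDiffAt (hV.mem_nhds hp)).differentiableAt (by simp)

lemma pdx_fd {u : ℝ × ℝ → ℝ} {V : Set (ℝ × ℝ)} (hV : IsOpen V)
    (hu : ContDiffOn ℝ (⊤ : ℕ∞) u V) {p : ℝ × ℝ} (hp : p ∈ V) :
    pdx u p = fderiv ℝ u p (1, 0) := (pdx_eq (cd_diff hV hu hp)).deriv

lemma pdy_fd {u : ℝ × ℝ → ℝ} {V : Set (ℝ × ℝ)} (hV : IsOpen V)
    (hu : ContDiffOn ℝ (⊤ : ℕ∞) u V) {p : ℝ × ℝ} (hp : p ∈ V) :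
    pdy u p = fderiv ℝ u p (0, 1) := (pdy_eq (cd_diff hV hu hp)).deriv

lemma pdx_hd {u : ℝ × ℝ → ℝ} {V : Set (ℝ × ℝ)} (hV : IsOpen V)
    (hu : ContDiffOn ℝ (⊤ : ℕ∞) u V) {p : ℝ × ℝ} (hp : p ∈ V) :
    HasDerivAt (fun t => u (t, p.2)) (pdx u p) p.1 := by
  rw [pdx_fd hV hu hp]; exact pdx_eq (cd_diff hV hu hp)

lemma pdy_hd {u : ℝ × ℝ → ℝ} {V : Set (ℝ × ℝ)} (hV : IsOpen V)
    (hu : ContDiffOn ℝ (⊤ : ℕ∞) u V) {p : ℝ × ℝ} (hp : p ∈ V) :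
    HasDerivAt (fun t => u (p.1, t)) (pdy u p) p.2 := by
  rw [pdy_fd hV hu hp]; exact pdy_eq (cd_diff hV hu hp)

lemma pdx_cd {u : ℝ × ℝ → ℝ} {V : Set (ℝ × ℝ)} (hV : IsOpen V)
    (hu : ContDiffOn ℝ (⊤ : ℕ∞) u V) : ContDiffOn ℝ (⊤ : ℕ∞) (pdx u) V := by
  have h : ContDiffOn ℝ (⊤ : ℕ∞) (fderiv ℝ u) V := hu.fderiv_of_isOpen hV (by simp)
  exact (h.clm_apply contDiffOn_const).congr (fun p hp => pdx_fd hV hu hp)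

lemma pdy_cd {u : ℝ × ℝ → ℝ} {V : Set (ℝ × ℝ)} (hV : IsOpen V)
    (hu : ContDiffOn ℝ (⊤ : ℕ∞) u V) : ContDiffOn ℝ (⊤ : ℕ∞) (pdy u) V := by
  have h : ContDiffOn ℝ (⊤ : ℕ∞) (fderiv ℝ u) V := hu.fderiv_of_isOpen hV (by simp)
  exact (h.clm_apply contDiffOn_const).congr (fun p hp => pdy_fd hV hu hp)

lemma pd_symm {u : ℝ × ℝ → ℝ} {V : Set (ℝ × ℝ)} (hV : IsOpen V)
    (hu : ContDiffOn ℝ (⊤ : ℕ∞) u V) {p : ℝ × ℝ} (hp : p ∈ V) :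
    pdx (pdy u) p = pdy (pdx u) p := by
  have h : ContDiffOn ℝ (⊤ : ℕ∞) (fderiv ℝ u) V := hu.fderiv_of_isOpen hV (by simp)
  have hd : DifferentiableAt ℝ (fderiv ℝ u) p :=
    (h.contDiffAt (hV.mem_nhds hp)).differentiableAt (by simp)
  have e1 : pdy u =ᶠ[nhds p] fun q => fderiv ℝ u q (0, 1) :=
    Filter.eventually_of_mem (hV.mem_nhds hp) (fun q hq => pdy_fd hV hu hq)
  have e2 : pdx u =ᶠ[nhds p] fun q => fderiv ℝ u q (1, 0) :=
    Filter.eventually_of_mem (hV.mem_nhds hp) (fun q hq => pdx_fd hV hu hq)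
  rw [pdx_fd hV (pdy_cd hV hu) hp, pdy_fd hV (pdx_cd hV hu) hp, e1.fderiv_eq, e2.fderiv_eq]
  rw [fderiv_clm_apply hd (differentiableAt_const _), fderiv_clm_apply hd (differentiableAt_const _)]
  have hs : IsSymmSndFDerivAt ℝ u p :=
    (hu.contDiffAt (hV.mem_nhds hp)).isSymmSndFDerivAt (by
      rw [minSmoothness_of_isRCLikeNormedField]; exact WithTop.coe_le_coe.2 (le_top : (2 : ℕ∞) ≤ ⊤))
  simp
  exact hs _ _

lemma fub {D : Set (ℝ × ℝ)} (hD : IsCompact D) {h : ℝ × ℝ → ℝ} (hh : ContinuousOn h D)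
    {a b : ℝ} (hab : a ≤ b) {l r : ℝ → ℝ} (hlr : ∀ x ∈ Icc a b, l x ≤ r x)
    (hm : ∀ x y, (x, y) ∈ D ↔ (x ∈ Icc a b ∧ y ∈ Icc (l x) (r x))) :
    ∫ p in D, h p = ∫ x in a..b, ∫ y in (l x)..(r x), h (x, y) := by
  have hi : Integrable (D.indicator h) :=
    (integrable_indicator_iff hD.measurableSet).2 (hh.integrableOn_compact hD)
  rw [← integral_indicator hD.measurableSet, Measure.volume_eq_prod, integral_prod _ hi,
    intervalIntegral.integral_of_le hab, ← integral_Icc_eq_integral_Ioc,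
    ← integral_indicator measurableSet_Icc]
  congr 1
  ext x
  by_cases hx : x ∈ Icc a b
  · rw [indicator_of_mem hx, intervalIntegral.integral_of_le (hlr x hx),
      ← integral_Icc_eq_integral_Ioc, ← integral_indicator measurableSet_Icc]
    congr 1
    ext y
    by_cases hy : y ∈ Icc (l x) (r x)
    · rw [indicator_of_mem hy, indicator_of_mem ((hm x y).2 ⟨hx, hy⟩)]
    · rw [indicator_of_notMem hy, indicator_of_notMem (fun hc => hy ((hm x y).1 hc).2)]
  · rw [indicator_of_notMem hx]
    have : (fun y => D.indicator h (x, y)) = fun _ => 0 := by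
      ext y
      exact indicator_of_notMem (fun hc => hx ((hm x y).1 hc).1) _
    rw [this]; simp

lemma fub_swap {D : Set (ℝ × ℝ)} (hD : IsCompact D) {h : ℝ × ℝ → ℝ} (hh : ContinuousOn h D)
    {a b : ℝ} (hab : a ≤ b) {l r : ℝ → ℝ} (hlr : ∀ x ∈ Icc a b, l x ≤ r x)
    (hm : ∀ x y, (y, x) ∈ D ↔ (x ∈ Icc a b ∧ y ∈ Icc (l x) (r x))) :
    ∫ p in D, h p = ∫ x in a..b, ∫ y in (l x)..(r x), h (y, x) := by
  have e : MeasurePreserving (MeasurableEquiv.prodComm : ℝ × ℝ ≃ᵐ ℝ × ℝ) volume volume := by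
    rw [Measure.volume_eq_prod]; exact Measure.measurePreserving_swap
  rw [← e.setIntegral_preimage_emb MeasurableEquiv.prodComm.measurableEmbedding h D]
  refine fub (h := fun p => h p.swap) (D := Prod.swap ⁻¹' D) ?_ ?_ hab hlr (fun x y => hm x y)
  · exact (Homeomorph.prodComm ℝ ℝ).isCompact_preimage.2 hD
  · exact hh.comp continuous_swap.continuousOn (fun p hp => hp)

/-- The right half disc. -/
def HD (α β : ℝ) : Set (ℝ × ℝ) := {p | (p.1 - α) ^ 2 + p.2 ^ 2 ≤ β ^ 2 ∧ α ≤ p.1}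

lemma HD_compact {α β : ℝ} (hβ : 0 < β) : IsCompact (HD α β) := by
  have hc : IsClosed (HD α β) :=
    (isClosed_le (f := fun p : ℝ × ℝ => (p.1 - α) ^ 2 + p.2 ^ 2) (g := fun _ => β ^ 2)
      (by fun_prop) (by fun_prop)).inter
    (isClosed_le (f := fun _ : ℝ × ℝ => α) (g := fun p : ℝ × ℝ => p.1) (by fun_prop) (by fun_prop))
  refine (isCompact_Icc (a := α) (b := α + β)).prod (isCompact_Icc (a := -β) (b := β))
    |>.of_isClosed_subset hc ?_
  rintro ⟨x, y⟩ ⟨h1, h2⟩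
  simp only at h1 h2
  refine ⟨⟨h2, ?_⟩, abs_le.1 (abs_le_of_sq_le_sq (by nlinarith) hβ.le)⟩
  have := abs_le_of_sq_le_sq (a := x - α) (b := β) (by nlinarith) hβ.le
  have := (abs_le.1 this).2
  simp only; linarith

lemma HD_mem1 {α β : ℝ} (hβ : 0 < β) (x y : ℝ) : (x, y) ∈ HD α β ↔
    (x ∈ Icc α (α + β) ∧ y ∈ Icc (-√(β ^ 2 - (x - α) ^ 2)) (√(β ^ 2 - (x - α) ^ 2))) := by
  constructor
  · rintro ⟨h1, h2⟩
    simp only at h1 h2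
    refine ⟨⟨h2, ?_⟩, abs_le.1 (Real.abs_le_sqrt (by linarith))⟩
    have := abs_le_of_sq_le_sq (a := x - α) (b := β) (by nlinarith) hβ.le
    have := (abs_le.1 this).2
    linarith
  · rintro ⟨⟨h1, h2⟩, h3⟩
    refine ⟨?_, h1⟩
    have h5 : (x - α) ^ 2 ≤ β ^ 2 := by nlinarith
    have h6 := sq_le_sq' h3.1 h3.2
    rw [Real.sq_sqrt (by linarith)] at h6
    simp only; linarith

lemma HD_mem2 {α β : ℝ} (hβ : 0 < β) (y x : ℝ) : (x, y) ∈ HD α β ↔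
    (y ∈ Icc (-β) β ∧ x ∈ Icc α (α + √(β ^ 2 - y ^ 2))) := by
  constructor
  · rintro ⟨h1, h2⟩
    simp only at h1 h2
    have h3 := (abs_le.1 (Real.abs_le_sqrt (x := x - α) (y := β ^ 2 - y ^ 2) (by linarith))).2
    exact ⟨abs_le.1 (abs_le_of_sq_le_sq (by nlinarith) hβ.le), h2, by linarith⟩
  · rintro ⟨h1, h2, h3⟩
    refine ⟨?_, h2⟩
    have h5 : y ^ 2 ≤ β ^ 2 := sq_le_sq' h1.1 h1.2
    have h6 : (x - α) ^ 2 ≤ √(β ^ 2 - y ^ 2) ^ 2 :=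
      pow_le_pow_left₀ (by linarith) (by linarith) 2
    rw [Real.sq_sqrt (by linarith)] at h6
    simp only; linarith

lemma HD_arc {α β : ℝ} (hβ : 0 < β) {θ : ℝ} (h : θ ∈ Icc (-(π / 2)) (π / 2)) :
    (α + β * cos θ, β * sin θ) ∈ HD α β := by
  have := Real.cos_nonneg_of_mem_Icc h
  refine ⟨?_, ?_⟩
  · simp only; nlinarith [Real.sin_sq_add_cos_sq θ]
  · simp only; nlinarith

lemma green_x {α β : ℝ} (hβ : 0 < β) {F F' : ℝ × ℝ → ℝ}
    (hF : ContinuousOn F (HD α β)) (hF' : ContinuousOn F' (HD α β))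
    (hd : ∀ p ∈ HD α β, HasDerivAt (fun t => F (t, p.2)) (F' p) p.1)
    (h0 : ∀ y, F (α, y) = 0) :
    ∫ p in HD α β, F' p =
      β * ∫ θ in (-(π / 2))..(π / 2), cos θ * F (α + β * cos θ, β * sin θ) := by
  rw [fub_swap (HD_compact hβ) hF' (by linarith : -β ≤ β)
    (l := fun _ => α) (r := fun y => α + √(β ^ 2 - y ^ 2))
    (fun x _ => by simp [Real.sqrt_nonneg]) (fun y x => HD_mem2 hβ y x)]
  have hg : ContinuousOn (fun y => F (α + √(β ^ 2 - y ^ 2), y)) (Icc (-β) β) := by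
    refine hF.comp (f := fun y : ℝ => (α + √(β ^ 2 - y ^ 2), y)) (by fun_prop) ?_
    intro y hy
    exact (HD_mem2 hβ _ _).2 ⟨hy, by simp [Real.sqrt_nonneg], le_rfl⟩
  have e1 : ∫ y in (-β)..β, ∫ x in α..(α + √(β ^ 2 - y ^ 2)), F' (x, y) =
      ∫ y in (-β)..β, F (α + √(β ^ 2 - y ^ 2), y) := by
    refine intervalIntegral.integral_congr ?_
    intro y hy
    rw [uIcc_of_le (by linarith)] at hy
    have hle : α ≤ α + √(β ^ 2 - y ^ 2) := by simp [Real.sqrt_nonneg]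
    have hm : ∀ x ∈ Icc α (α + √(β ^ 2 - y ^ 2)), (x, y) ∈ HD α β :=
      fun x hx => (HD_mem2 hβ _ _).2 ⟨hy, hx⟩
    have := intervalIntegral.integral_eq_sub_of_hasDerivAt (a := α) (b := α + √(β ^ 2 - y ^ 2))
      (f := fun t => F (t, y)) (f' := fun t => F' (t, y))
      (fun x hx => hd (x, y) (hm x (by rwa [uIcc_of_le hle] at hx)))
      (ContinuousOn.intervalIntegrable (by
        rw [uIcc_of_le hle]
        exact hF'.comp (f := fun t : ℝ => (t, y)) (by fun_prop) hm))
    simp only at this ⊢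
    rw [this, h0, sub_zero]
  rw [e1]
  have hpi : -(π / 2) ≤ π / 2 := by linarith [Real.pi_pos]
  have hsub := intervalIntegral.integral_comp_mul_deriv'' (a := -(π / 2)) (b := π / 2)
    (f := fun θ => β * sin θ) (f' := fun θ => β * cos θ)
    (g := fun y => F (α + √(β ^ 2 - y ^ 2), y)) (by fun_prop)
    (fun x _ => ((Real.hasDerivAt_sin x).const_mul β).hasDerivWithinAt) (by fun_prop)
    (hg.mono (by
      rintro _ ⟨θ, _, rfl⟩
      constructor <;> simp only <;> nlinarith [Real.sin_le_one θ, Real.neg_one_le_sin θ]))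
  simp only [Real.sin_neg, Real.sin_pi_div_two, mul_one, mul_neg] at hsub
  rw [← hsub, ← intervalIntegral.integral_const_mul]
  refine intervalIntegral.integral_congr ?_
  intro θ hθ
  rw [uIcc_of_le hpi] at hθ
  have hs : √(β ^ 2 - (β * sin θ) ^ 2) = β * cos θ := by
    rw [show β ^ 2 - (β * sin θ) ^ 2 = (β * cos θ) ^ 2 by
      nlinarith [Real.sin_sq_add_cos_sq θ]]
    exact Real.sqrt_sq (mul_nonneg hβ.le (Real.cos_nonneg_of_mem_Icc hθ))
  simp only [Function.comp, hs]
  ring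

lemma green_y {α β : ℝ} (hβ : 0 < β) {G G' : ℝ × ℝ → ℝ}
    (hG : ContinuousOn G (HD α β)) (hG' : ContinuousOn G' (HD α β))
    (hd : ∀ p ∈ HD α β, HasDerivAt (fun t => G (p.1, t)) (G' p) p.2) :
    ∫ p in HD α β, G' p =
      β * ∫ θ in (-(π / 2))..(π / 2), sin θ * G (α + β * cos θ, β * sin θ) := by
  have hab : α ≤ α + β := by linarith
  have hpi := Real.pi_pos
  rw [fub (HD_compact hβ) hG' hab
    (l := fun x => -√(β ^ 2 - (x - α) ^ 2)) (r := fun x => √(β ^ 2 - (x - α) ^ 2))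
    (fun x _ => by linarith [Real.sqrt_nonneg (β ^ 2 - (x - α) ^ 2)])
    (fun x y => HD_mem1 hβ x y)]
  have hg1 : ContinuousOn (fun x => G (x, √(β ^ 2 - (x - α) ^ 2))) (Icc α (α + β)) := by
    refine hG.comp (f := fun x : ℝ => (x, √(β ^ 2 - (x - α) ^ 2))) (by fun_prop) ?_
    intro x hx
    exact (HD_mem1 hβ _ _).2 ⟨hx, by linarith [Real.sqrt_nonneg (β ^ 2 - (x - α) ^ 2)], le_rfl⟩
  have hg2 : ContinuousOn (fun x => G (x, -√(β ^ 2 - (x - α) ^ 2))) (Icc α (α + β)) := by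
    refine hG.comp (f := fun x : ℝ => (x, -√(β ^ 2 - (x - α) ^ 2))) (by fun_prop) ?_
    intro x hx
    exact (HD_mem1 hβ _ _).2 ⟨hx, le_rfl, by linarith [Real.sqrt_nonneg (β ^ 2 - (x - α) ^ 2)]⟩
  have e1 : ∫ x in α..(α + β), ∫ y in (-√(β ^ 2 - (x - α) ^ 2))..(√(β ^ 2 - (x - α) ^ 2)),
        G' (x, y) =
      ∫ x in α..(α + β), (G (x, √(β ^ 2 - (x - α) ^ 2)) - G (x, -√(β ^ 2 - (x - α) ^ 2))) := by
    refine intervalIntegral.integral_congr ?_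
    intro x hx
    rw [uIcc_of_le hab] at hx
    have hle : -√(β ^ 2 - (x - α) ^ 2) ≤ √(β ^ 2 - (x - α) ^ 2) := by
      linarith [Real.sqrt_nonneg (β ^ 2 - (x - α) ^ 2)]
    have hm : ∀ y ∈ Icc (-√(β ^ 2 - (x - α) ^ 2)) (√(β ^ 2 - (x - α) ^ 2)), (x, y) ∈ HD α β :=
      fun y hy => (HD_mem1 hβ _ _).2 ⟨hx, hy⟩
    exact intervalIntegral.integral_eq_sub_of_hasDerivAt
      (f := fun t => G (x, t)) (f' := fun t => G' (x, t))
      (fun y hy => hd (x, y) (hm y (by rwa [uIcc_of_le hle] at hy)))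
      (ContinuousOn.intervalIntegrable (by
        rw [uIcc_of_le hle]
        exact hG'.comp (f := fun t : ℝ => (x, t)) (by fun_prop) hm))
  rw [e1, intervalIntegral.integral_sub
    (ContinuousOn.intervalIntegrable (by rwa [uIcc_of_le hab]))
    (ContinuousOn.intervalIntegrable (by rwa [uIcc_of_le hab]))]
  have hcont : ContinuousOn (fun θ => sin θ * G (α + β * cos θ, β * sin θ))
      (Icc (-(π / 2)) (π / 2)) := by
    refine ContinuousOn.mul (by fun_prop) ?_
    exact hG.comp (f := fun θ : ℝ => (α + β * cos θ, β * sin θ)) (by fun_prop)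
      (fun θ hθ => HD_arc hβ hθ)
  have hsq : ∀ θ, √(β ^ 2 - (α + β * cos θ - α) ^ 2) = β * |sin θ| := by
    intro θ
    rw [show β ^ 2 - (α + β * cos θ - α) ^ 2 = (β * sin θ) ^ 2 by
      nlinarith [Real.sin_sq_add_cos_sq θ], Real.sqrt_sq_eq_abs, abs_mul, abs_of_pos hβ]
  have s1 := intervalIntegral.integral_comp_mul_deriv'' (a := 0) (b := π / 2)
    (f := fun θ => α + β * cos θ) (f' := fun θ => β * (-sin θ))
    (g := fun x => G (x, √(β ^ 2 - (x - α) ^ 2))) (by fun_prop)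
    (fun x _ => (((Real.hasDerivAt_cos x).const_mul β).const_add α).hasDerivWithinAt) (by fun_prop)
    (hg1.mono (by
      rintro _ ⟨θ, hθ, rfl⟩
      rw [uIcc_of_le (by linarith)] at hθ
      have := Real.cos_nonneg_of_mem_Icc (x := θ) ⟨by linarith [hθ.1], hθ.2⟩
      constructor <;> simp only <;> nlinarith [Real.cos_le_one θ]))
  have s2 := intervalIntegral.integral_comp_mul_deriv'' (a := -(π / 2)) (b := 0)
    (f := fun θ => α + β * cos θ) (f' := fun θ => β * (-sin θ))
    (g := fun x => G (x, -√(β ^ 2 - (x - α) ^ 2))) (by fun_prop)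
    (fun x _ => (((Real.hasDerivAt_cos x).const_mul β).const_add α).hasDerivWithinAt) (by fun_prop)
    (hg2.mono (by
      rintro _ ⟨θ, hθ, rfl⟩
      rw [uIcc_of_le (by linarith)] at hθ
      have := Real.cos_nonneg_of_mem_Icc (x := θ) ⟨hθ.1, by linarith [hθ.2]⟩
      constructor <;> simp only <;> nlinarith [Real.cos_le_one θ]))
  simp only [Real.cos_neg, Real.cos_pi_div_two, Real.cos_zero, mul_one, mul_zero, add_zero]
    at s1 s2
  rw [intervalIntegral.integral_symm α (α + β)] at s1
  have t1 : ∫ θ in (0 : ℝ)..(π / 2),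
      ((fun x => G (x, √(β ^ 2 - (x - α) ^ 2))) ∘ fun θ => α + β * cos θ) θ * (β * -sin θ) =
      -(β * ∫ θ in (0 : ℝ)..(π / 2), sin θ * G (α + β * cos θ, β * sin θ)) := by
    rw [← intervalIntegral.integral_const_mul, ← intervalIntegral.integral_neg]
    refine intervalIntegral.integral_congr ?_
    intro θ hθ
    rw [uIcc_of_le (by linarith)] at hθ
    simp only [Function.comp, hsq, abs_of_nonneg
      (Real.sin_nonneg_of_nonneg_of_le_pi hθ.1 (by linarith [hθ.2]))]
    ring
  have t2 : ∫ θ in (-(π / 2))..0,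
      ((fun x => G (x, -√(β ^ 2 - (x - α) ^ 2))) ∘ fun θ => α + β * cos θ) θ * (β * -sin θ) =
      -(β * ∫ θ in (-(π / 2))..0, sin θ * G (α + β * cos θ, β * sin θ)) := by
    rw [← intervalIntegral.integral_const_mul, ← intervalIntegral.integral_neg]
    refine intervalIntegral.integral_congr ?_
    intro θ hθ
    rw [uIcc_of_le (by linarith)] at hθ
    simp only [Function.comp, hsq, abs_of_nonpos
      (Real.sin_nonpos_of_nonpos_of_neg_pi_le hθ.2 (by linarith [hθ.1]))]
    simp only [mul_neg, neg_neg]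
    ring
  rw [← intervalIntegral.integral_add_adjacent_intervals (a := -(π / 2)) (b := 0) (c := π / 2)
    (ContinuousOn.intervalIntegrable (hcont.mono (by
      rw [uIcc_of_le (by linarith)]; exact Icc_subset_Icc le_rfl (by linarith))))
    (ContinuousOn.intervalIntegrable (hcont.mono (by
      rw [uIcc_of_le (by linarith)]; exact Icc_subset_Icc (by linarith) le_rfl)))]
  linarith

lemma tangential {α β : ℝ} (hβ : 0 < β) {u : ℝ × ℝ → ℝ} {V : Set (ℝ × ℝ)} (hV : IsOpen V)
    (hDV : HD α β ⊆ V) (hu : ContDiffOn ℝ (⊤ : ℕ∞) u V)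
    (h0 : ∀ θ ∈ Icc (-(π / 2)) (π / 2), u (α + β * cos θ, β * sin θ) = 0)
    {θ : ℝ} (hθ : θ ∈ Ioo (-(π / 2)) (π / 2)) :
    cos θ * pdy u (α + β * cos θ, β * sin θ) = sin θ * pdx u (α + β * cos θ, β * sin θ) := by
  have hp : (α + β * cos θ, β * sin θ) ∈ V := hDV (HD_arc hβ ⟨hθ.1.le, hθ.2.le⟩)
  rw [pdx_fd hV hu hp, pdy_fd hV hu hp]
  have h1 : HasDerivAt (fun t : ℝ => (α + β * cos t, β * sin t)) (β * (-sin θ), β * cos θ) θ :=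
    (((Real.hasDerivAt_cos θ).const_mul β).const_add α).prodMk
      ((Real.hasDerivAt_sin θ).const_mul β)
  have h2 : HasDerivAt (fun t : ℝ => u (α + β * cos t, β * sin t))
      (fderiv ℝ u (α + β * cos θ, β * sin θ) (β * (-sin θ), β * cos θ)) θ :=
    HasFDerivAt.comp_hasDerivAt (f := fun t : ℝ => (α + β * cos t, β * sin t)) θ (l := u)
      (cd_diff hV hu hp).hasFDerivAt h1
  have h3 : HasDerivAt (fun t : ℝ => u (α + β * cos t, β * sin t)) 0 θ := by
    refine (hasDerivAt_const θ (0 : ℝ)).congr_of_eventuallyEq ?_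
    filter_upwards [isOpen_Ioo.mem_nhds hθ] with t ht
    exact h0 t ⟨ht.1.le, ht.2.le⟩
  have h4 := h2.unique h3
  have h5 : ((β * (-sin θ), β * cos θ) : ℝ × ℝ) =
      (β * (-sin θ)) • ((1 : ℝ), (0 : ℝ)) + (β * cos θ) • ((0 : ℝ), (1 : ℝ)) := by
    ext <;> simp
  rw [h5, map_add, map_smul, map_smul, smul_eq_mul, smul_eq_mul] at h4
  have h6 : β * (cos θ * fderiv ℝ u (α + β * cos θ, β * sin θ) (0, 1) -
    sin θ * fderiv ℝ u (α + β * cos θ, β * sin θ) (1, 0)) = 0 := by linarith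
  rcases mul_eq_zero.1 h6 with h | h
  · exact absurd h hβ.ne'
  · linarith

lemma key_ineq {β K ε L w c c' a ax ay f A : ℝ} (hε : 0 < ε) (hL : 1 ≤ L)
    (hw0 : 0 ≤ w) (hw : w ≤ β) (hc : |c| ≤ K) (hc' : |c'| ≤ K)
    (hA : A = 4 * K ^ 2 / ε + K + β ^ 2 * K ^ 2) :
    L ^ 2 * (4 * w * c * ax * ay + w ^ 2 * c' * (ay ^ 2 - ax ^ 2 + L ^ 2 * a ^ 2)
        - 2 * w ^ 2 * c * ay * f)
      - 2 * A * L ^ 4 * (w ^ 2 * (ax ^ 2 + ay ^ 2) + 2 * w * a * ax - w ^ 2 * a * (L ^ 2 * a + f)) ≤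
    (A * (4 + 2 * β ^ 2 + β ^ 4) + K * β ^ 2 + A + 1) * L ^ 8 * a ^ 2 + ε * ax ^ 2 +
    (A * (4 + 2 * β ^ 2 + β ^ 4) + K * β ^ 2 + A + 1) * f ^ 2 := by
  have hK : 0 ≤ K := (abs_nonneg c).trans hc
  have hβ : 0 ≤ β := hw0.trans hw
  have hA0 : 0 ≤ A := by rw [hA]; positivity
  have hc2 : c ^ 2 ≤ K ^ 2 := sq_le_sq' (abs_le.1 hc).1 (abs_le.1 hc).2
  have hw2 : w ^ 2 ≤ β ^ 2 := pow_le_pow_left₀ hw0 hw 2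
  have hw4 : w ^ 4 ≤ β ^ 4 := pow_le_pow_left₀ hw0 hw 4
  have L2 : L ^ 2 ≤ L ^ 4 := pow_le_pow_right₀ hL (by norm_num)
  have L4 : L ^ 4 ≤ L ^ 8 := pow_le_pow_right₀ hL (by norm_num)
  have L6 : L ^ 6 ≤ L ^ 8 := pow_le_pow_right₀ hL (by norm_num)
  have hLp : 0 < L := by linarith
  -- term 1
  have t1 : L ^ 2 * (4 * w * c * ax * ay) ≤ ε * ax ^ 2 + 4 * K ^ 2 / ε * L ^ 4 * w ^ 2 * ay ^ 2 := by
    have e1 : L ^ 2 * (4 * w * c * ax * ay) ≤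
        ε * ax ^ 2 + 4 * c ^ 2 / ε * L ^ 4 * w ^ 2 * ay ^ 2 := by
      have : ε * ax ^ 2 + 4 * c ^ 2 / ε * L ^ 4 * w ^ 2 * ay ^ 2 - L ^ 2 * (4 * w * c * ax * ay)
        = (ε * ax - 2 * c * L ^ 2 * w * ay) ^ 2 / ε := by field_simp; ring
      have h2 : 0 ≤ (ε * ax - 2 * c * L ^ 2 * w * ay) ^ 2 / ε := by positivity
      linarith
    have e2 : 4 * c ^ 2 / ε * L ^ 4 * w ^ 2 * ay ^ 2 ≤ 4 * K ^ 2 / ε * L ^ 4 * w ^ 2 * ay ^ 2 := by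
      gcongr
    linarith
  have t2 : L ^ 2 * (w ^ 2 * c' * (ay ^ 2 - ax ^ 2 + L ^ 2 * a ^ 2)) ≤
      K * L ^ 4 * w ^ 2 * (ax ^ 2 + ay ^ 2) + K * β ^ 2 * L ^ 8 * a ^ 2 := by
    have e1 : c' * (ay ^ 2 - ax ^ 2 + L ^ 2 * a ^ 2) ≤ K * (ax ^ 2 + ay ^ 2 + L ^ 2 * a ^ 2) := by
      have h1 := (abs_le.1 hc').1
      have h2 := (abs_le.1 hc').2
      have : 0 ≤ L ^ 2 * a ^ 2 := by positivity
      nlinarith [mul_nonneg (sub_nonneg.2 h2) (sq_nonneg ay), mul_nonneg (sub_nonneg.2 h2) this,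
        mul_nonneg (sub_nonneg.2 h1) (sq_nonneg ax)]
    have e2 := mul_le_mul_of_nonneg_left e1 (by positivity : 0 ≤ L ^ 2 * w ^ 2)
    have e3 : K * L ^ 2 * w ^ 2 * (ax ^ 2 + ay ^ 2) ≤ K * L ^ 4 * w ^ 2 * (ax ^ 2 + ay ^ 2) := by
      gcongr
    have e4 : K * w ^ 2 * L ^ 4 * a ^ 2 ≤ K * β ^ 2 * L ^ 8 * a ^ 2 := by gcongr
    linarith
  have t3 : L ^ 2 * (-(2 * w ^ 2 * c * ay * f)) ≤ f ^ 2 + β ^ 2 * K ^ 2 * L ^ 4 * w ^ 2 * ay ^ 2 := by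
    have e1 : L ^ 2 * (-(2 * w ^ 2 * c * ay * f)) ≤ f ^ 2 + w ^ 2 * c ^ 2 * L ^ 4 * w ^ 2 * ay ^ 2 := by
      nlinarith [sq_nonneg (f + L ^ 2 * w ^ 2 * c * ay)]
    have e2 : w ^ 2 * c ^ 2 * L ^ 4 * w ^ 2 * ay ^ 2 ≤ β ^ 2 * K ^ 2 * L ^ 4 * w ^ 2 * ay ^ 2 := by
      gcongr
    linarith
  have t123 : 4 * K ^ 2 / ε * L ^ 4 * w ^ 2 * ay ^ 2 + K * L ^ 4 * w ^ 2 * (ax ^ 2 + ay ^ 2) +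
      β ^ 2 * K ^ 2 * L ^ 4 * w ^ 2 * ay ^ 2 ≤ A * L ^ 4 * w ^ 2 * (ax ^ 2 + ay ^ 2) := by
    have : A * L ^ 4 * w ^ 2 * (ax ^ 2 + ay ^ 2) - (4 * K ^ 2 / ε * L ^ 4 * w ^ 2 * ay ^ 2 +
      K * L ^ 4 * w ^ 2 * (ax ^ 2 + ay ^ 2) + β ^ 2 * K ^ 2 * L ^ 4 * w ^ 2 * ay ^ 2) =
      4 * K ^ 2 / ε * L ^ 4 * w ^ 2 * ax ^ 2 + β ^ 2 * K ^ 2 * L ^ 4 * w ^ 2 * ax ^ 2 := by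
      rw [hA]; ring
    have h2 : 0 ≤ 4 * K ^ 2 / ε * L ^ 4 * w ^ 2 * ax ^ 2 + β ^ 2 * K ^ 2 * L ^ 4 * w ^ 2 * ax ^ 2 := by
      positivity
    linarith
  have t4 : -(4 * A * L ^ 4 * (w * a * ax)) ≤ A * L ^ 4 * w ^ 2 * ax ^ 2 + 4 * A * L ^ 8 * a ^ 2 := by
    have e1 : 0 ≤ A * L ^ 4 * (w * ax + 2 * a) ^ 2 := by positivity
    have e2 : 4 * A * L ^ 4 * a ^ 2 ≤ 4 * A * L ^ 8 * a ^ 2 := by gcongr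
    linarith
  have t4' : A * L ^ 4 * w ^ 2 * ax ^ 2 ≤ A * L ^ 4 * w ^ 2 * (ax ^ 2 + ay ^ 2) := by
    gcongr; nlinarith [sq_nonneg ay]
  have t5 : 2 * A * w ^ 2 * L ^ 6 * a ^ 2 ≤ 2 * A * β ^ 2 * L ^ 8 * a ^ 2 := by gcongr
  have t6 : 2 * A * L ^ 4 * w ^ 2 * a * f ≤ A * β ^ 4 * L ^ 8 * a ^ 2 + A * f ^ 2 := by
    have e1 : 0 ≤ A * (L ^ 4 * w ^ 2 * a - f) ^ 2 := by positivity
    have e2 : A * w ^ 4 * L ^ 8 * a ^ 2 ≤ A * β ^ 4 * L ^ 8 * a ^ 2 := by gcongr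
    linarith
  have p1 : 0 ≤ (A + 1) * L ^ 8 * a ^ 2 := by positivity
  have p2 : 0 ≤ (A * (4 + 2 * β ^ 2 + β ^ 4) + K * β ^ 2) * f ^ 2 := by positivity
  linarith

set_option maxHeartbeats 2000000 in
lemma half {α β : ℝ} (hβ : 0 < β) {χ : ℝ → ℝ} (hχ : ContDiff ℝ (⊤ : ℕ∞) χ) {K : ℝ}
    (hK : ∀ y ∈ Icc (-β) β, |χ y| ≤ K ∧ |deriv χ y| ≤ K) {ε : ℝ} (hε : 0 < ε) {A C : ℝ}
    (hA : A = 4 * K ^ 2 / ε + K + β ^ 2 * K ^ 2)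
    (hC : C = A * (4 + 2 * β ^ 2 + β ^ 4) + K * β ^ 2 + A + 1)
    {u f : ℝ × ℝ → ℝ} {V : Set (ℝ × ℝ)} (hV : IsOpen V)
    (hDV : HD α β ⊆ V) (hu : ContDiffOn ℝ (⊤ : ℕ∞) u V)
    (h0 : ∀ θ ∈ Icc (-(π / 2)) (π / 2), u (α + β * cos θ, β * sin θ) = 0)
    {L : ℝ} (hL : 1 ≤ L) (hf : ∀ p ∈ HD α β, lap u p - L ^ 2 * u p = f p) :
    L ^ 2 * (β * ∫ θ in (-(π / 2))..(π / 2), (β * cos θ) ^ 2 * χ (β * sin θ) *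
      pdy u (α + β * cos θ, β * sin θ) * (cos θ * pdx u (α + β * cos θ, β * sin θ) +
        sin θ * pdy u (α + β * cos θ, β * sin θ))) ≤
    C * L ^ 8 * (∫ p in HD α β, u p ^ 2) + ε * (∫ p in HD α β, pdx u p ^ 2) +
      C * (∫ p in HD α β, f p ^ 2) := by
  have hpi := Real.pi_pos
  have hux := pdx_cd hV hu
  have huy := pdy_cd hV hu
  have c0 : ContinuousOn u (HD α β) := hu.continuousOn.mono hDV
  have cx : ContinuousOn (pdx u) (HD α β) := hux.continuousOn.mono hDV
  have cy : ContinuousOn (pdy u) (HD α β) := huy.continuousOn.mono hDV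
  have cxx : ContinuousOn (pdx (pdx u)) (HD α β) := (pdx_cd hV hux).continuousOn.mono hDV
  have cxy : ContinuousOn (pdx (pdy u)) (HD α β) := (pdx_cd hV huy).continuousOn.mono hDV
  have cyx : ContinuousOn (pdy (pdx u)) (HD α β) := (pdy_cd hV hux).continuousOn.mono hDV
  have cyy : ContinuousOn (pdy (pdy u)) (HD α β) := (pdy_cd hV huy).continuousOn.mono hDV
  have cf : ContinuousOn f (HD α β) := by
    refine ContinuousOn.congr (f := fun p => lap u p - L ^ 2 * u p) ?_ (fun p hp => (hf p hp).symm)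
    unfold lap
    fun_prop
  have cχ : Continuous χ := hχ.continuous
  have cχ' : Continuous (deriv χ) := hχ.continuous_deriv (by simp)
  set M := 2 * A * L ^ 4 with hM
  have gx := green_x (α := α) hβ
    (F := fun p => (p.1 - α) ^ 2 * (2 * L ^ 2 * χ p.2 * pdx u p * pdy u p - M * u p * pdx u p))
    (F' := fun p => 2 * (p.1 - α) *
        (2 * L ^ 2 * χ p.2 * pdx u p * pdy u p - M * u p * pdx u p) +
      (p.1 - α) ^ 2 * (2 * L ^ 2 * χ p.2 * (pdx (pdx u) p * pdy u p + pdx u p * pdx (pdy u) p)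
        - M * (pdx u p * pdx u p + u p * pdx (pdx u) p)))
    (by fun_prop) (by fun_prop)
    (by
      intro p hp
      have d0 := pdx_hd hV hu (hDV hp)
      have d1 := pdx_hd hV hux (hDV hp)
      have d2 := pdx_hd hV huy (hDV hp)
      have dw : HasDerivAt (fun t : ℝ => (t - α) ^ 2) (2 * (p.1 - α)) p.1 := by
        
        have := ((hasDerivAt_id p.1).sub_const α).pow 2
        refine this.congr_deriv ?_
        simp
      have := dw.mul (((d1.const_mul (2 * L ^ 2 * χ p.2)).mul d2).sub ((d0.const_mul M).mul d1))
      refine this.congr_deriv ?_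
      simp only [Pi.sub_apply, Pi.mul_apply]
      ring)
    (by intro y; simp)
  have gy := green_y (α := α) hβ
    (G := fun p => (p.1 - α) ^ 2 * (L ^ 2 * χ p.2 * (pdy u p ^ 2 - pdx u p ^ 2 + L ^ 2 * u p ^ 2)
      - M * u p * pdy u p))
    (G' := fun p => (p.1 - α) ^ 2 *
      (L ^ 2 * deriv χ p.2 * (pdy u p ^ 2 - pdx u p ^ 2 + L ^ 2 * u p ^ 2) +
       L ^ 2 * χ p.2 * (2 * pdy u p * pdy (pdy u) p - 2 * pdx u p * pdy (pdx u) p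
        + L ^ 2 * (2 * u p * pdy u p))
      - M * (pdy u p * pdy u p + u p * pdy (pdy u) p)))
    (by fun_prop) (by fun_prop)
    (by
      intro p hp
      have d0 := pdy_hd hV hu (hDV hp)
      have d1 := pdy_hd hV hux (hDV hp)
      have d2 := pdy_hd hV huy (hDV hp)
      have dχ : HasDerivAt χ (deriv χ p.2) p.2 :=
        (hχ.differentiable (by simp) p.2).hasDerivAt
      have := (((dχ.const_mul (L ^ 2)).mul
        (((d2.pow 2).sub (d1.pow 2)).add ((d0.pow 2).const_mul (L ^ 2)))).sub
        ((d0.const_mul M).mul d2)).const_mul ((p.1 - α) ^ 2)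
      refine this.congr_deriv ?_
      simp only [Pi.sub_apply, Pi.add_apply, Pi.pow_apply]
      push_cast
      ring)
  have hcomp : ContinuousOn (fun θ : ℝ => (α + β * cos θ, β * sin θ)) (uIcc (-(π / 2)) (π / 2)) := by
    fun_prop
  have hmaps : MapsTo (fun θ : ℝ => (α + β * cos θ, β * sin θ)) (uIcc (-(π / 2)) (π / 2))
      (HD α β) := by
    intro θ hθ
    rw [uIcc_of_le (by linarith)] at hθ
    exact HD_arc hβ hθ
  have b0 : ContinuousOn (fun θ : ℝ => u (α + β * cos θ, β * sin θ)) (uIcc (-(π / 2)) (π / 2)) :=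
    c0.comp hcomp hmaps
  have bx : ContinuousOn (fun θ : ℝ => pdx u (α + β * cos θ, β * sin θ))
    (uIcc (-(π / 2)) (π / 2)) := cx.comp hcomp hmaps
  have byy : ContinuousOn (fun θ : ℝ => pdy u (α + β * cos θ, β * sin θ))
    (uIcc (-(π / 2)) (π / 2)) := cy.comp hcomp hmaps
  have hB : L ^ 2 * (β * ∫ θ in (-(π / 2))..(π / 2), (β * cos θ) ^ 2 * χ (β * sin θ) *
      pdy u (α + β * cos θ, β * sin θ) * (cos θ * pdx u (α + β * cos θ, β * sin θ) +
        sin θ * pdy u (α + β * cos θ, β * sin θ))) =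
      (∫ p in HD α β, (2 * (p.1 - α) *
        (2 * L ^ 2 * χ p.2 * pdx u p * pdy u p - M * u p * pdx u p) +
      (p.1 - α) ^ 2 * (2 * L ^ 2 * χ p.2 * (pdx (pdx u) p * pdy u p + pdx u p * pdx (pdy u) p)
        - M * (pdx u p * pdx u p + u p * pdx (pdx u) p)))) +
      ∫ p in HD α β, ((p.1 - α) ^ 2 *
      (L ^ 2 * deriv χ p.2 * (pdy u p ^ 2 - pdx u p ^ 2 + L ^ 2 * u p ^ 2) +
       L ^ 2 * χ p.2 * (2 * pdy u p * pdy (pdy u) p - 2 * pdx u p * pdy (pdx u) p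
        + L ^ 2 * (2 * u p * pdy u p))
      - M * (pdy u p * pdy u p + u p * pdy (pdy u) p))) := by
    rw [gx, gy, ← mul_add, ← intervalIntegral.integral_add
      (ContinuousOn.intervalIntegrable (by fun_prop))
      (ContinuousOn.intervalIntegrable (by fun_prop)), mul_left_comm,
      ← intervalIntegral.integral_const_mul]
    congr 1
    refine intervalIntegral.integral_congr ?_
    intro θ hθ
    rw [uIcc_of_le (by linarith)] at hθ
    have hz := h0 θ hθ
    have ht : (β * cos θ) ^ 2 * (cos θ * pdy u (α + β * cos θ, β * sin θ)) =
        (β * cos θ) ^ 2 * (sin θ * pdx u (α + β * cos θ, β * sin θ)) := by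
      rcases eq_or_lt_of_le hθ.1 with h | h
      · rw [← h]; simp
      rcases eq_or_lt_of_le hθ.2 with h' | h'
      · rw [h']; simp
      rw [tangential hβ hV hDV hu h0 ⟨h, h'⟩]
    simp only [hz]
    linear_combination (-(L ^ 2 * χ (β * sin θ) * pdx u (α + β * cos θ, β * sin θ))) * ht
  have hi : ∀ g : ℝ × ℝ → ℝ, ContinuousOn g (HD α β) → IntegrableOn g (HD α β) :=
    fun g hg => hg.integrableOn_compact (HD_compact hβ)
  rw [hB, ← integral_add (hi _ (by fun_prop)) (hi _ (by fun_prop)), ← integral_const_mul,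
    ← integral_const_mul, ← integral_const_mul,
    ← integral_add (hi _ (by fun_prop)) (hi _ (by fun_prop)),
    ← integral_add (hi _ (by fun_prop)) (hi _ (by fun_prop))]
  refine setIntegral_mono_on (hi _ (by fun_prop)) (hi _ (by fun_prop))
    (HD_compact hβ).measurableSet ?_
  rintro ⟨x, y⟩ hp
  have hx := ((HD_mem1 hβ x y).1 hp).1
  have hy := ((HD_mem2 hβ y x).1 hp).1
  have hkey := key_ineq (β := β) (w := x - α) (a := u (x, y)) (ax := pdx u (x, y))
    (ay := pdy u (x, y)) (f := f (x, y)) hε hL (by linarith [hx.1]) (by linarith [hx.2])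
    (hK y hy).1 (hK y hy).2 hA
  have hfe := hf _ hp
  unfold lap at hfe
  have hs := pd_symm hV hu (hDV hp)
  rw [hC]
  refine le_trans (le_of_eq ?_) hkey
  simp only [hM]
  rw [← hfe, hs]
  ring

/-- Reflection in the first coordinate. -/
def rfl1 (p : ℝ × ℝ) : ℝ × ℝ := (-p.1, p.2)

/-- The left half disc. -/
def HDm (α β : ℝ) : Set (ℝ × ℝ) := {p | (p.1 + α) ^ 2 + p.2 ^ 2 ≤ β ^ 2 ∧ p.1 ≤ -α}

/-- Reflection as a homeomorphism. -/
def rflH : ℝ × ℝ ≃ₜ ℝ × ℝ := (Homeomorph.neg ℝ).prodCongr (Homeomorph.refl ℝ)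

lemma rfl1_pre (α β : ℝ) : rfl1 ⁻¹' (HDm α β) = HD α β := by
  ext ⟨x, y⟩
  simp only [rfl1, HDm, HD, mem_preimage, mem_setOf_eq]
  rw [show (-x + α) ^ 2 = (x - α) ^ 2 by ring]
  constructor <;> rintro ⟨h1, h2⟩ <;> exact ⟨h1, by linarith⟩

lemma rfl1_mem {α β : ℝ} {p : ℝ × ℝ} (hp : p ∈ HD α β) : rfl1 p ∈ HDm α β := by
  rw [← rfl1_pre] at hp; exact hp

lemma HDm_compact {α β : ℝ} (hβ : 0 < β) : IsCompact (HDm α β) := by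
  have h := HD_compact (α := α) hβ
  rw [← rfl1_pre] at h
  exact rflH.isCompact_preimage.1 h

lemma rfl1_int (α β : ℝ) (g : ℝ × ℝ → ℝ) :
    ∫ p in HD α β, g (rfl1 p) = ∫ p in HDm α β, g p := by
  have e : MeasurePreserving rfl1 volume volume := by
    rw [Measure.volume_eq_prod]
    exact (Measure.measurePreserving_neg (volume : Measure ℝ)).prod
      (MeasurePreserving.id (volume : Measure ℝ))
  have he : MeasurableEmbedding rfl1 := rflH.measurableEmbedding
  rw [← e.setIntegral_preimage_emb he g (HDm α β), rfl1_pre]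

lemma pdx_rfl (u : ℝ × ℝ → ℝ) : pdx (fun p => u (rfl1 p)) = fun p => -pdx u (rfl1 p) := by
  ext p
  exact deriv_comp_neg (fun t => u (t, p.2)) p.1

lemma pdx_neg' (u : ℝ × ℝ → ℝ) : pdx (fun p => -u p) = fun p => -pdx u p := by
  ext p
  exact deriv.fun_neg (f := fun t => u (t, p.2))

lemma pdy_rfl (u : ℝ × ℝ → ℝ) : pdy (fun p => u (rfl1 p)) = fun p => pdy u (rfl1 p) := rfl

lemma lap_rfl (u : ℝ × ℝ → ℝ) (p : ℝ × ℝ) : lap (fun p => u (rfl1 p)) p = lap u (rfl1 p) := by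
  unfold lap
  rw [pdx_rfl, pdx_neg', pdx_rfl, pdy_rfl, pdy_rfl]
  simp

lemma Wings_eq (α β : ℝ) : Wings α β = HD α β ∪ HDm α β := rfl

/-- Region II estimate, first version: for `χ` smooth, supported in
`{|y| > β/20}`, equal to `-1` for `y ≤ -β/10` and `1` for `y ≥ β/10`, and every `ε > 0`,
there are `C > 0` and `λ₀ > 0` such that every real Dirichlet quasimode datum with
`λ ≥ λ₀` satisfies
`λ² ∫_{∂S ∩ W} w² χ(y)(∂_y u)(∂_N u) dl ≤ C λ⁸ ‖u‖²_{L²(W)} + ε ∫_S (∂_x u)² + C ‖f‖²`. -/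
theorem stmt15 (α β : ℝ) (hα : 0 < α) (hβ : 0 < β)
    (χ : ℝ → ℝ) (hχ : ContDiff ℝ (⊤ : ℕ∞) χ)
    (hχsupp : Function.support χ ⊆ {y : ℝ | β / 20 < |y|})
    (hχm : ∀ y, y ≤ -(β / 10) → χ y = -1)
    (hχp : ∀ y, β / 10 ≤ y → χ y = 1) :
    ∀ ε > 0, ∃ C > 0, ∃ lam₀ > 0, ∀ d : QMDatum α β, d.lam ≥ lam₀ →
      d.lam ^ 2 *
        bdryIntW α β (fun p n => (|p.1| - α) ^ 2 * χ p.2 * pdy d.u p * nderiv d.u p n) ≤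
        C * d.lam ^ 8 * (∫ p in Wings α β, (d.u p) ^ 2) +
        ε * (∫ p in Stadium α β, (pdx d.u p) ^ 2) +
        C * (∫ p in Stadium α β, (d.f p) ^ 2) := by
  intro ε hε
  obtain ⟨K1, hK1⟩ := (isCompact_Icc (a := -β) (b := β)).exists_bound_of_continuousOn
    hχ.continuous.continuousOn
  obtain ⟨K2, hK2⟩ := (isCompact_Icc (a := -β) (b := β)).exists_bound_of_continuousOn
    (hχ.continuous_deriv (by simp)).continuousOn
  obtain ⟨K, hKdef⟩ : ∃ K, K = max K1 K2 := ⟨_, rfl⟩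
  have hK : ∀ y ∈ Icc (-β) β, |χ y| ≤ K ∧ |deriv χ y| ≤ K := fun y hy =>
    ⟨(hK1 y hy).trans (hKdef ▸ le_max_left _ _), (hK2 y hy).trans (hKdef ▸ le_max_right _ _)⟩
  have hK0 : 0 ≤ K := (abs_nonneg _).trans (hK 0 ⟨by linarith, hβ.le⟩).1
  obtain ⟨A, hA⟩ : ∃ A, A = 4 * K ^ 2 / ε + K + β ^ 2 * K ^ 2 := ⟨_, rfl⟩
  obtain ⟨C, hC⟩ : ∃ C, C = A * (4 + 2 * β ^ 2 + β ^ 4) + K * β ^ 2 + A + 1 := ⟨_, rfl⟩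
  have hA0 : 0 ≤ A := by rw [hA]; positivity
  have hC0 : 0 < C := by rw [hC]; positivity
  refine ⟨C, hC0, 1, one_pos, ?_⟩
  rintro ⟨u, L, f, hLp, ⟨V, hV, hSV, hu⟩, hdir, heq⟩ hL
  simp only [ge_iff_le] at hL ⊢
  have hS1 : HD α β ⊆ Stadium α β := fun p hp => Or.inr (Or.inl hp)
  have hS2 : HDm α β ⊆ Stadium α β := fun p hp => Or.inr (Or.inr hp)
  have hSc : IsCompact (Stadium α β) :=
    (isCompact_Icc.prod isCompact_Icc).union ((HD_compact hβ).union (HDm_compact hβ))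
  have hr : ContDiff ℝ (⊤ : ℕ∞) rfl1 := contDiff_fst.neg.prodMk contDiff_snd
  have hcos : ∀ θ ∈ Icc (-(π / 2)) (π / 2), |α + β * cos θ| = α + β * cos θ := by
    intro θ hθ
    have := Real.cos_nonneg_of_mem_Icc hθ
    exact abs_of_nonneg (by positivity)
  have hcirc : ∀ θ, (α + β * cos θ - α) ^ 2 + (β * sin θ) ^ 2 = β ^ 2 := by
    intro θ; nlinarith [Real.sin_sq_add_cos_sq θ]
  have hge : ∀ θ ∈ Icc (-(π / 2)) (π / 2), α ≤ α + β * cos θ := by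
    intro θ hθ
    have := Real.cos_nonneg_of_mem_Icc hθ
    nlinarith
  have h1 := half hβ hχ hK hε hA hC hV (hS1.trans hSV) hu
    (fun θ hθ => hdir _ (Or.inr ⟨by simp only [hcos θ hθ, hcirc], by
      simp only [hcos θ hθ, hge θ hθ]⟩)) hL (fun p hp => heq p (hS1 hp))
  have h2 := half (α := α) hβ hχ hK hε hA hC (u := fun p => u (rfl1 p)) (f := fun p => f (rfl1 p))
    (V := rfl1 ⁻¹' V)
    (hV.preimage hr.continuous) (fun p hp => hSV (hS2 (rfl1_mem hp)))
    (hu.comp hr.contDiffOn (fun p hp => hp))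
    (fun θ hθ => hdir _ (Or.inr ⟨by simp only [rfl1, abs_neg, hcos θ hθ, hcirc], by
      simp only [rfl1, abs_neg, hcos θ hθ, hge θ hθ]⟩)) hL
    (fun p hp => by rw [lap_rfl]; exact heq _ (hS2 (rfl1_mem hp)))
  rw [pdx_rfl, pdy_rfl] at h2
  simp only [neg_sq] at h2
  rw [rfl1_int α β (fun p => u p ^ 2), rfl1_int α β (fun p => pdx u p ^ 2),
    rfl1_int α β (fun p => f p ^ 2)] at h2
  have c0 : ContinuousOn u (Stadium α β) := hu.continuousOn.mono hSV
  have cx : ContinuousOn (pdx u) (Stadium α β) := (pdx_cd hV hu).continuousOn.mono hSV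
  have cy : ContinuousOn (pdy u) (Stadium α β) := (pdy_cd hV hu).continuousOn.mono hSV
  have cxx : ContinuousOn (pdx (pdx u)) (Stadium α β) :=
    (pdx_cd hV (pdx_cd hV hu)).continuousOn.mono hSV
  have cyy : ContinuousOn (pdy (pdy u)) (Stadium α β) :=
    (pdy_cd hV (pdy_cd hV hu)).continuousOn.mono hSV
  have cf : ContinuousOn f (Stadium α β) := by
    refine ContinuousOn.congr (f := fun p => lap u p - L ^ 2 * u p) ?_ (fun p hp => (heq p hp).symm)
    unfold lap
    fun_prop
  have hsplit : ∀ g : ℝ × ℝ → ℝ, ContinuousOn g (Stadium α β) →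
      ∫ p in Wings α β, g p = (∫ p in HD α β, g p) + ∫ p in HDm α β, g p := by
    intro g hg
    rw [Wings_eq]
    refine setIntegral_union ?_ (HDm_compact hβ).measurableSet
      ((hg.mono hS1).integrableOn_compact (HD_compact hβ))
      ((hg.mono hS2).integrableOn_compact (HDm_compact hβ))
    rw [Set.disjoint_left]
    rintro p ⟨_, hp⟩ ⟨_, hp'⟩
    linarith
  have hmono : ∀ g : ℝ × ℝ → ℝ, ContinuousOn g (Stadium α β) → (∀ p, 0 ≤ g p) →
      ∫ p in Wings α β, g p ≤ ∫ p in Stadium α β, g p := by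
    intro g hg hg0
    exact setIntegral_mono_set (hg.integrableOn_compact hSc)
      (Filter.Eventually.of_forall hg0) (Filter.Eventually.of_forall (fun p hp => Or.inr hp))
  have m1 := hmono (fun p => pdx u p ^ 2) (by fun_prop) (fun p => sq_nonneg _)
  have m2 := hmono (fun p => f p ^ 2) (by fun_prop) (fun p => sq_nonneg _)
  rw [hsplit (fun p => pdx u p ^ 2) (by fun_prop)] at m1
  rw [hsplit (fun p => f p ^ 2) (by fun_prop)] at m2
  rw [hsplit (fun p => u p ^ 2) (by fun_prop)]
  have m1' := mul_le_mul_of_nonneg_left m1 hε.le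
  have m2' := mul_le_mul_of_nonneg_left m2 hC0.le
  have hpi : -(π / 2) ≤ π / 2 := by linarith [Real.pi_pos]
  have hcp : ContinuousOn (fun θ : ℝ => (α + β * cos θ, β * sin θ))
    (uIcc (-(π / 2)) (π / 2)) := by fun_prop
  have hcm : ContinuousOn (fun θ : ℝ => rfl1 (α + β * cos θ, β * sin θ))
    (uIcc (-(π / 2)) (π / 2)) := by unfold rfl1; fun_prop
  have hmp : MapsTo (fun θ : ℝ => (α + β * cos θ, β * sin θ)) (uIcc (-(π / 2)) (π / 2))
      (Stadium α β) := by
    intro θ hθ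
    rw [uIcc_of_le hpi] at hθ
    exact hS1 (HD_arc hβ hθ)
  have hmm : MapsTo (fun θ : ℝ => rfl1 (α + β * cos θ, β * sin θ)) (uIcc (-(π / 2)) (π / 2))
      (Stadium α β) := by
    intro θ hθ
    rw [uIcc_of_le hpi] at hθ
    exact hS2 (rfl1_mem (HD_arc hβ hθ))
  have hχc := hχ.continuous
  have bxp : ContinuousOn (fun θ : ℝ => pdx u (α + β * cos θ, β * sin θ))
    (uIcc (-(π / 2)) (π / 2)) := cx.comp hcp hmp
  have byp : ContinuousOn (fun θ : ℝ => pdy u (α + β * cos θ, β * sin θ))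
    (uIcc (-(π / 2)) (π / 2)) := cy.comp hcp hmp
  have bxm : ContinuousOn (fun θ : ℝ => pdx u (rfl1 (α + β * cos θ, β * sin θ)))
    (uIcc (-(π / 2)) (π / 2)) := cx.comp hcm hmm
  have bym : ContinuousOn (fun θ : ℝ => pdy u (rfl1 (α + β * cos θ, β * sin θ)))
    (uIcc (-(π / 2)) (π / 2)) := cy.comp hcm hmm
  have hB : bdryIntW α β (fun p n => (|p.1| - α) ^ 2 * χ p.2 * pdy u p * nderiv u p n) =
      (β * ∫ θ in (-(π / 2))..(π / 2), (β * cos θ) ^ 2 * χ (β * sin θ) *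
      pdy u (α + β * cos θ, β * sin θ) * (cos θ * pdx u (α + β * cos θ, β * sin θ) +
        sin θ * pdy u (α + β * cos θ, β * sin θ))) +
      (β * ∫ θ in (-(π / 2))..(π / 2), (β * cos θ) ^ 2 * χ (β * sin θ) *
      pdy u (rfl1 (α + β * cos θ, β * sin θ)) *
        (cos θ * -pdx u (rfl1 (α + β * cos θ, β * sin θ)) +
        sin θ * pdy u (rfl1 (α + β * cos θ, β * sin θ)))) := by
    rw [← mul_add, ← intervalIntegral.integral_add
      (ContinuousOn.intervalIntegrable (by fun_prop))
      (ContinuousOn.intervalIntegrable (by fun_prop))]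
    unfold bdryIntW
    congr 1
    refine intervalIntegral.integral_congr ?_
    intro θ hθ
    rw [uIcc_of_le hpi] at hθ
    simp only [nderiv, rfl1, abs_neg, hcos θ hθ]
    ring
  rw [hB]
  linarith
end
end
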